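/- The set of primes p such that p ≡ 1 (mod 16) and 2 is not a fourth power modulo p has natural density 1/16 in the set of all primes; that is, the limit as X → ∞ of #{p ≤ X : p prime, p ≡ 1 (mod 16), 2 is not a fourth power mod p} / #{p ≤ X : p prime} equals 1/16. -/

import Mathlib

open Filter

/-!
Let `ψ (a + b * I) = I ^ (b / 2)` on the primary Gaussian integers (`b` even, `a + b ≡ 1 [MOD 4]`).
By Gauss, for a prime `p = a ^ 2 + b ^ 2` with `p ≡ 1 [MOD 8]` the number `2` is a fourth power
modulo `p` if and only if `8 ∣ b`; so the coefficient at `p` of the Dirichlet series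
`∑ ψ z / (norm z) ^ s` is `2` or `-2` according to whether `2` is a fourth power modulo `p`, and it
is `0` at the other primes. Twisted by a Dirichlet character modulo `16`, the coefficients have
partial sums `O(√N)`, so the twisted series continue past the line `re s = 1`. They do not vanish on
that line: a zero would give the logarithmic derivative a residue of absolute value at least `1`,
but only primes `≡ 1 [MOD 8]`, each with weight at most `2`, contribute to it, which bounds the
residue by `2 / 4`. Hence the Wiener–Ikehara theorem applies, and the values `2` and `-2` are
equally frequent among the primes `≡ 1 [MOD 16]`, whose density is `1 / 8`.
-/

namespace QuarticDensity

open MeasureTheory Topology Set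

section FejerKernel

/-- The Fejér kernel `v ↦ (1 - cos v) / v ^ 2`, encoded as the cosine transform of the triangle
function, which gives it the right value `1 / 2` at `v = 0`. -/
noncomputable def fejerKernel (v : ℝ) : ℝ := ∫ w in (0 : ℝ)..1, (1 - w) * Real.cos (w * v)

lemma fejerKernel_mul_sq (v : ℝ) : fejerKernel v * v ^ 2 = 1 - Real.cos v := by
  rcases eq_or_ne v 0 with rfl | hv
  · simp
  have hderiv (w : ℝ) : HasDerivAt
      (fun w ↦ (1 - w) * Real.sin (w * v) / v - Real.cos (w * v) / v ^ 2)
      ((1 - w) * Real.cos (w * v)) w := by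
    have hlin : HasDerivAt (fun w : ℝ ↦ w * v) v w := by
      simpa using (hasDerivAt_id w).mul_const v
    have hsub : HasDerivAt (fun w : ℝ ↦ 1 - w) (-1) w := by
      simpa using (hasDerivAt_id w).const_sub 1
    refine (((hsub.mul hlin.sin).div_const v).sub (hlin.cos.div_const (v ^ 2))).congr_deriv ?_
    field_simp
    ring
  rw [fejerKernel, intervalIntegral.integral_eq_sub_of_hasDerivAt (fun w _ ↦ hderiv w)
    ((by fun_prop : Continuous _).intervalIntegrable _ _)]
  simp only [sub_self, one_mul, zero_mul, zero_div, zero_sub, sub_zero, Real.sin_zero, mul_zero,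
    Real.cos_zero, one_div, sub_neg_eq_add]
  field_simp
  ring

@[fun_prop]
lemma continuous_fejerKernel : Continuous fejerKernel :=
  intervalIntegral.continuous_parametric_intervalIntegral_of_continuous' (by fun_prop) 0 1

@[fun_prop]
lemma measurable_fejerKernel : Measurable fejerKernel := continuous_fejerKernel.measurable

lemma fejerKernel_zero : fejerKernel 0 = 1 / 2 := by
  simp only [fejerKernel, mul_zero, Real.cos_zero, mul_one]
  rw [intervalIntegral.integral_sub (by simp) (by simp), intervalIntegral.integral_const,
    integral_id]
  norm_num

lemma fejerKernel_nonneg (v : ℝ) : 0 ≤ fejerKernel v := by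
  rcases eq_or_ne v 0 with rfl | hv
  · norm_num [fejerKernel_zero]
  refine nonneg_of_mul_nonneg_left ?_ (sq_pos_of_ne_zero hv)
  rw [fejerKernel_mul_sq]
  linarith [Real.cos_le_one v]

lemma fejerKernel_le_one (v : ℝ) : fejerKernel v ≤ 1 := by
  have hnorm : ‖fejerKernel v‖ ≤ 1 * |1 - 0| := by
    refine intervalIntegral.norm_integral_le_of_norm_le_const fun w hw ↦ ?_
    rw [uIoc_of_le zero_le_one] at hw
    rw [norm_mul]
    refine mul_le_one₀ ?_ (norm_nonneg _) (Real.abs_cos_le_one _)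
    rw [Real.norm_eq_abs, abs_le]
    constructor <;> linarith [hw.1, hw.2]
  rw [sub_zero, abs_one, mul_one] at hnorm
  exact (le_abs_self _).trans hnorm

lemma fejerKernel_le_inv_one_add_sq (v : ℝ) : fejerKernel v ≤ 3 * (1 + v ^ 2)⁻¹ := by
  rw [← div_eq_mul_inv, le_div_iff₀ (by positivity)]
  linarith [fejerKernel_mul_sq v, fejerKernel_le_one v, Real.neg_one_le_cos v]

lemma integrable_fejerKernel : Integrable fejerKernel := by
  refine (integrable_inv_one_add_sq.const_mul 3).mono' (by fun_prop) (ae_of_all _ fun v ↦ ?_)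
  rw [Real.norm_of_nonneg (fejerKernel_nonneg v)]
  exact fejerKernel_le_inv_one_add_sq v

lemma integral_fejerKernel_pos : 0 < ∫ v, fejerKernel v := by
  rw [integral_pos_iff_support_of_nonneg fejerKernel_nonneg integrable_fejerKernel]
  exact continuous_fejerKernel.isOpen_support.measure_pos _
    ⟨0, by norm_num [Function.mem_support, fejerKernel_zero]⟩

lemma fejerKernel_eq_re (v : ℝ) : fejerKernel v =
    (∫ w in Ioc (0 : ℝ) 1, ((1 - w : ℝ) : ℂ) * Complex.exp (Complex.I * (w * v : ℝ))).re := by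
  have hint : IntegrableOn
      (fun w : ℝ ↦ ((1 - w : ℝ) : ℂ) * Complex.exp (Complex.I * (w * v : ℝ))) (Ioc 0 1) :=
    Continuous.integrableOn_Ioc (by fun_prop)
  rw [fejerKernel, intervalIntegral.integral_of_le zero_le_one, ← RCLike.re_eq_complex_re,
    ← integral_re hint]
  refine integral_congr_ae (ae_of_all _ fun w ↦ ?_)
  simp only [RCLike.re_eq_complex_re, Complex.re_ofReal_mul, mul_comm Complex.I,
    Complex.exp_ofReal_mul_I_re]

end FejerKernel

section Averages

/-- The average of `f` near `y` against the Fejér kernel rescaled to width `1 / l`; it is not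
normalised, its total mass is `∫ v, fejerKernel v`. -/
noncomputable def fejerAverage (f : ℝ → ℝ) (l y : ℝ) : ℝ := ∫ v, f (y - v / l) * fejerKernel v

variable {f : ℝ → ℝ} {C : ℝ}

lemma integrable_comp_mul_fejerKernel (hf : Measurable f) (hC : ∀ t, |f t| ≤ C) (l y : ℝ) :
    Integrable fun v ↦ f (y - v / l) * fejerKernel v :=
  integrable_fejerKernel.bdd_mul (c := C)
    (by fun_prop : Measurable fun v ↦ f (y - v / l)).aestronglyMeasurable (ae_of_all _ fun _ ↦ hC _)

lemma fejerAverage_add {g : ℝ → ℝ} {D : ℝ} (hf : Measurable f) (hC : ∀ t, |f t| ≤ C)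
    (hg : Measurable g) (hD : ∀ t, |g t| ≤ D) (l y : ℝ) :
    fejerAverage (fun t ↦ f t + g t) l y = fejerAverage f l y + fejerAverage g l y := by
  simp only [fejerAverage, add_mul]
  exact integral_add (integrable_comp_mul_fejerKernel hf hC l y)
    (integrable_comp_mul_fejerKernel hg hD l y)

lemma fejerAverage_eq_mul_integral {l : ℝ} (hl : 0 < l) (y : ℝ) :
    fejerAverage f l y = l * ∫ t, f t * fejerKernel (l * (y - t)) := by
  have hscale := Measure.integral_comp_mul_left (fun v ↦ f (y - v / l) * fejerKernel v) l
  rw [abs_of_pos (inv_pos.mpr hl), smul_eq_mul] at hscale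
  rw [← integral_sub_left_eq_self (fun t ↦ f t * fejerKernel (l * (y - t))) volume y]
  simp only [mul_div_cancel_left₀ _ hl.ne'] at hscale
  simp only [sub_sub_cancel, hscale, mul_inv_cancel_left₀ hl.ne', fejerAverage]

lemma tendsto_fejerAverage_indicator_const (c l : ℝ) :
    Tendsto (fejerAverage ((Ici 0).indicator fun _ ↦ c) l) atTop
      (𝓝 (c * ∫ v, fejerKernel v)) := by
  have hmeas : Measurable ((Ici (0 : ℝ)).indicator fun _ ↦ c) :=
    measurable_const.indicator measurableSet_Ici
  rw [← integral_const_mul]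
  refine tendsto_integral_filter_of_dominated_convergence (fun v ↦ |c| * fejerKernel v)
    (Eventually.of_forall fun y ↦ by fun_prop) (Eventually.of_forall fun y ↦ ae_of_all _ fun v ↦ ?_)
    (integrable_fejerKernel.const_mul _) (ae_of_all _ fun v ↦ ?_)
  · rw [norm_mul, Real.norm_of_nonneg (fejerKernel_nonneg v)]
    gcongr
    · exact fejerKernel_nonneg v
    · exact norm_indicator_le_norm_self _ _
  · refine tendsto_const_nhds.congr' ?_
    filter_upwards [eventually_ge_atTop (v / l)] with y hy
    rw [indicator_of_mem (mem_Ici.mpr (sub_nonneg.mpr hy))]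

end Averages

section SlowlyDecreasing

variable {f : ℝ → ℝ} {C R : ℝ}

lemma le_exp_mul_of_monotone_exp_mul (hf0 : ∀ t, 0 ≤ f t)
    (hmono : Monotone fun t ↦ Real.exp t * f t) {s t δ : ℝ} (hst : s ≤ t) (hts : t ≤ s + δ) :
    f s ≤ Real.exp δ * f t := by
  refine le_of_mul_le_mul_left ?_ (Real.exp_pos s)
  calc Real.exp s * f s ≤ Real.exp t * f t := hmono hst
    _ ≤ Real.exp (s + δ) * f t := by gcongr; exact hf0 t
    _ = Real.exp s * (Real.exp δ * f t) := by rw [Real.exp_add, mul_assoc]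

lemma abs_div_sq_le_one_div (hR : 0 < R) {v : ℝ} (hv : v ∈ Icc (-R) R) : |v / R ^ 2| ≤ 1 / R := by
  rw [abs_div, abs_of_pos (pow_pos hR 2), div_le_div_iff₀ (pow_pos hR 2) hR, one_mul, sq]
  exact mul_le_mul_of_nonneg_right (abs_le.mpr hv) hR.le

lemma tendsto_setIntegral_fejerKernel :
    Tendsto (fun R ↦ ∫ v in Icc (-R) R, fejerKernel v) atTop (𝓝 (∫ v, fejerKernel v)) :=
  (aecover_Icc (μ := (volume : Measure ℝ)) tendsto_neg_atTop_atBot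
    tendsto_id).integral_tendsto_of_countably_generated integrable_fejerKernel

lemma mul_setIntegral_le_fejerAverage (hf : Measurable f) (hf0 : ∀ t, 0 ≤ f t)
    (hfC : ∀ t, f t ≤ C) (hmono : Monotone fun t ↦ Real.exp t * f t) (hR : 0 < R) (t : ℝ) :
    f t * ∫ v in Icc (-R) R, fejerKernel v ≤
      Real.exp (2 / R) * fejerAverage f (R ^ 2) (t + 1 / R) := by
  have hint := (integrable_comp_mul_fejerKernel hf (C := C)
    (fun t ↦ by rw [abs_of_nonneg (hf0 t)]; exact hfC t) (R ^ 2) (t + 1 / R)).const_mul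
    (Real.exp (2 / R))
  rw [fejerAverage, ← integral_const_mul, ← integral_const_mul]
  refine (setIntegral_mono_on (integrable_fejerKernel.const_mul _).integrableOn hint.integrableOn
    measurableSet_Icc fun v hv ↦ ?_).trans (setIntegral_le_integral hint (ae_of_all _ fun v ↦
      mul_nonneg (Real.exp_pos _).le (mul_nonneg (hf0 _) (fejerKernel_nonneg v))))
  obtain ⟨hlow, hupp⟩ := abs_le.mp (abs_div_sq_le_one_div hR hv)
  have hδ : 2 / R = 1 / R + 1 / R := by ring
  rw [← mul_assoc]
  exact mul_le_mul_of_nonneg_right (le_exp_mul_of_monotone_exp_mul hf0 hmono (by linarith)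
    (by linarith)) (fejerKernel_nonneg v)

lemma fejerAverage_le_add (hf : Measurable f) (hf0 : ∀ t, 0 ≤ f t)
    (hfC : ∀ t, f t ≤ C) (hmono : Monotone fun t ↦ Real.exp t * f t) (hR : 0 < R) (t : ℝ) :
    fejerAverage f (R ^ 2) (t - 1 / R) ≤ f t * (Real.exp (2 / R) *
      ∫ v in Icc (-R) R, fejerKernel v) +
      C * ((∫ v, fejerKernel v) - ∫ v in Icc (-R) R, fejerKernel v) := by
  have hint := integrable_comp_mul_fejerKernel hf (C := C)
    (fun t ↦ by rw [abs_of_nonneg (hf0 t)]; exact hfC t) (R ^ 2) (t - 1 / R)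
  rw [fejerAverage, ← integral_add_compl (s := Icc (-R) R) measurableSet_Icc hint,
    ← setIntegral_compl measurableSet_Icc integrable_fejerKernel, ← mul_assoc,
    ← integral_const_mul, ← integral_const_mul]
  gcongr ?_ + ?_
  · refine setIntegral_mono_on hint.integrableOn (integrable_fejerKernel.const_mul _).integrableOn
      measurableSet_Icc fun v hv ↦ mul_le_mul_of_nonneg_right ?_ (fejerKernel_nonneg v)
    obtain ⟨hlow, hupp⟩ := abs_le.mp (abs_div_sq_le_one_div hR hv)
    have hδ : 2 / R = 1 / R + 1 / R := by ring
    rw [mul_comm (f t)]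
    exact le_exp_mul_of_monotone_exp_mul hf0 hmono (by linarith) (by linarith)
  · exact setIntegral_mono_on hint.integrableOn (integrable_fejerKernel.const_mul _).integrableOn
      measurableSet_Icc.compl fun v _ ↦ mul_le_mul_of_nonneg_right (hfC _) (fejerKernel_nonneg v)

lemma tendsto_exp_two_div_atTop : Tendsto (fun R : ℝ ↦ Real.exp (2 / R)) atTop (𝓝 1) := by
  simpa using (tendsto_const_nhds.div_atTop tendsto_id : Tendsto (fun R : ℝ ↦ 2 / R) _ _).rexp

/-- The averages are taken at scale `1 / R ^ 2` around `t ± 1 / R`, so that up to a small tail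
`f` is only evaluated on one side of `t`, where monotonicity of `exp * f` compares it to `f t`. -/
lemma tendsto_of_tendsto_fejerAverage (hf : Measurable f) (hf0 : ∀ t, 0 ≤ f t)
    (hfC : ∀ t, f t ≤ C) (hmono : Monotone fun t ↦ Real.exp t * f t) {c : ℝ}
    (hlim : ∀ l : ℝ, 0 < l → Tendsto (fejerAverage f l) atTop (𝓝 (c * ∫ v, fejerKernel v))) :
    Tendsto f atTop (𝓝 c) := by
  set I := ∫ v, fejerKernel v
  set J : ℝ → ℝ := fun R ↦ ∫ v in Icc (-R) R, fejerKernel v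
  have hI : 0 < I := integral_fejerKernel_pos
  have hJ : Tendsto J atTop (𝓝 I) := tendsto_setIntegral_fejerKernel
  have hpos : ∀ᶠ R in atTop, 0 < R ∧ 0 < J R :=
    (eventually_gt_atTop 0).and (hJ.eventually_const_lt hI)
  refine tendsto_order.mpr ⟨fun a ha ↦ ?_, fun a ha ↦ ?_⟩
  · have hbound : Tendsto (fun R ↦ c * I - C * (I - J R) - a * (Real.exp (2 / R) * J R)) atTop
        (𝓝 ((c - a) * I)) := by
      convert ((hJ.const_sub I).const_mul C).const_sub (c * I) |>.sub
        ((tendsto_exp_two_div_atTop.mul hJ).const_mul a) using 2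
      ring
    obtain ⟨R, hRa, hR, hRJ⟩ :=
      ((hbound.eventually_const_lt (mul_pos (sub_pos.mpr ha) hI)).and hpos).exists
    have hshift : Tendsto (fun t ↦ fejerAverage f (R ^ 2) (t - 1 / R)) atTop (𝓝 (c * I)) :=
      (hlim _ (pow_pos hR 2)).comp (tendsto_atTop_add_const_right _ _ tendsto_id)
    filter_upwards [hshift.eventually_const_lt
      (u := a * (Real.exp (2 / R) * J R) + C * (I - J R)) (by linarith)] with t ht
    refine lt_of_mul_lt_mul_right ?_ (mul_pos (Real.exp_pos (2 / R)) hRJ).le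
    linarith only [fejerAverage_le_add hf hf0 hfC hmono hR t, ht]
  · have hbound : Tendsto (fun R : ℝ ↦ a * J R - Real.exp (2 / R) * (c * I)) atTop
        (𝓝 ((a - c) * I)) := by
      convert (hJ.const_mul a).sub (tendsto_exp_two_div_atTop.mul_const (c * I)) using 2
      ring
    obtain ⟨R, hRa, hR, hRJ⟩ :=
      ((hbound.eventually_const_lt (mul_pos (sub_pos.mpr ha) hI)).and hpos).exists
    have hshift : Tendsto (fun t ↦ Real.exp (2 / R) * fejerAverage f (R ^ 2) (t + 1 / R)) atTop
        (𝓝 (Real.exp (2 / R) * (c * I))) :=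
      ((hlim _ (pow_pos hR 2)).comp (tendsto_atTop_add_const_right _ _ tendsto_id)).const_mul _
    filter_upwards [hshift.eventually_lt_const (sub_pos.mp hRa)] with t ht
    exact lt_of_mul_lt_mul_right
      ((mul_setIntegral_le_fejerAverage hf hf0 hfC hmono hR t).trans_lt ht) hRJ.le

end SlowlyDecreasing

section LaplaceTransform

/-- The integral of `H` over the vertical segment from `d` to `d + I * l`, weighted by the triangle
function and by the frequency `y`. -/
noncomputable def segmentIntegral (H : ℂ → ℂ) (l y d : ℝ) : ℂ :=
  ∫ w in Ioc (0 : ℝ) 1, ((1 - w : ℝ) : ℂ) * Complex.exp (Complex.I * (l * y * w : ℝ)) *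
    H (d + Complex.I * (l * w : ℝ))

lemma norm_one_sub_mul_exp_le_one (x : ℝ) {w : ℝ} (hw : w ∈ Ioc (0 : ℝ) 1) :
    ‖((1 - w : ℝ) : ℂ) * Complex.exp (Complex.I * (x : ℝ))‖ ≤ 1 := by
  rw [norm_mul, mul_comm Complex.I, Complex.norm_exp_ofReal_mul_I, mul_one, Complex.norm_real,
    Real.norm_eq_abs, abs_le]
  constructor <;> linarith [hw.1, hw.2]

variable {H : ℂ → ℂ} {l y : ℝ}

lemma tendsto_segmentIntegral_zero (hH : ContinuousOn H {z | 0 ≤ z.re}) (hl : 0 ≤ l) :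
    Tendsto (segmentIntegral H l y) (𝓝[>] 0) (𝓝 (segmentIntegral H l y 0)) := by
  obtain ⟨B, hB⟩ := (isCompact_Icc.reProdIm isCompact_Icc).exists_bound_of_continuousOn
    (hH.mono fun z (hz : z ∈ Icc (0 : ℝ) 1 ×ℂ Icc (0 : ℝ) l) ↦ hz.1.1)
  refine tendsto_integral_filter_of_dominated_convergence (fun _ ↦ B) ?_ ?_ (by simp)
    (ae_of_all _ fun w ↦ ?_)
  · filter_upwards [self_mem_nhdsWithin] with d hd
    refine (Continuous.mul (by fun_prop) ?_).aestronglyMeasurable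
    exact hH.comp_continuous (by fun_prop) fun w ↦ by simpa using (mem_Ioi.mp hd).le
  · filter_upwards [Ioc_mem_nhdsGT zero_lt_one] with d hd
    filter_upwards [ae_restrict_mem measurableSet_Ioc] with w hw
    rw [norm_mul]
    have hHB : ‖H (d + Complex.I * (l * w : ℝ))‖ ≤ B := by
      refine hB _ (Complex.mem_reProdIm.mpr ⟨by simpa using ⟨hd.1.le, hd.2⟩, ?_⟩)
      simpa using ⟨mul_nonneg hl hw.1.le, mul_le_of_le_one_right hl hw.2⟩
    exact (mul_le_of_le_one_left (norm_nonneg _) (norm_one_sub_mul_exp_le_one _ hw)).trans hHB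
  · have hcont : ContinuousOn (fun d : ℝ ↦ H (d + Complex.I * (l * w : ℝ))) (Ici 0) :=
      hH.comp (by fun_prop) fun d hd ↦ by simpa using hd
    exact ((hcont 0 self_mem_Ici).mono Ioi_subset_Ici_self).tendsto.const_mul _

lemma tendsto_segmentIntegral_atTop (H : ℂ → ℂ) (hl : 0 < l) (d : ℝ) :
    Tendsto (fun y ↦ segmentIntegral H l y d) atTop (𝓝 0) := by
  have hfreq : Tendsto (fun y : ℝ ↦ -(l / (2 * Real.pi)) * y) atTop (cocompact ℝ) :=
    (tendsto_id.const_mul_atTop_of_neg (neg_lt_zero.mpr (by positivity))).mono_right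
      atBot_le_cocompact
  refine ((Real.tendsto_integral_exp_smul_cocompact ((Ioc (0 : ℝ) 1).indicator fun w : ℝ ↦
    ((1 - w : ℝ) : ℂ) * H (d + Complex.I * (l * w : ℝ)))).comp hfreq).congr fun y ↦ ?_
  rw [segmentIntegral, ← integral_indicator measurableSet_Ioc, Function.comp_apply]
  refine integral_congr_ae (ae_of_all _ fun w ↦ ?_)
  have hangle : 2 * Real.pi * -(w * (-(l / (2 * Real.pi)) * y)) = l * y * w := by
    field_simp
  simp only [indicator, smul_ite, smul_zero, Circle.smul_def, Real.fourierChar_apply, smul_eq_mul,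
    hangle]
  split_ifs
  · ring_nf
  · rfl

variable {f : ℝ → ℝ} {B : ℝ}

lemma integrable_fejerKernel_comp_mul_sub (hl : l ≠ 0) (y : ℝ) :
    Integrable fun t ↦ fejerKernel (l * (y - t)) :=
  (integrable_fejerKernel.comp_mul_left' hl).comp_sub_left y

lemma tendsto_integral_mul_exp_mul_fejerKernel (hf : Measurable f) (hB : ∀ t, |f t| ≤ B)
    (hl : l ≠ 0) :
    Tendsto (fun d : ℝ ↦ ∫ t in Ioi (0 : ℝ), f t * Real.exp (-d * t) * fejerKernel (l * (y - t)))
      (𝓝[>] 0) (𝓝 (∫ t in Ioi (0 : ℝ), f t * fejerKernel (l * (y - t)))) := by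
  refine tendsto_integral_filter_of_dominated_convergence
    (fun t ↦ B * fejerKernel (l * (y - t)))
    (Eventually.of_forall fun d ↦ Measurable.aestronglyMeasurable (by fun_prop)) ?_
    ((integrable_fejerKernel_comp_mul_sub hl y).const_mul _).integrableOn (ae_of_all _ fun t ↦ ?_)
  · filter_upwards [self_mem_nhdsWithin] with d hd
    filter_upwards [ae_restrict_mem measurableSet_Ioi] with t ht
    rw [norm_mul, norm_mul, Real.norm_of_nonneg (fejerKernel_nonneg _), Real.norm_eq_abs,
      Real.norm_eq_abs, Real.abs_exp]
    refine mul_le_mul_of_nonneg_right ?_ (fejerKernel_nonneg _)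
    refine (mul_le_of_le_one_right (abs_nonneg _) (Real.exp_le_one_iff.mpr ?_)).trans (hB t)
    rw [neg_mul, neg_nonpos]
    exact (mul_pos hd ht).le
  · have hcont : Continuous fun d : ℝ ↦ f t * Real.exp (-d * t) * fejerKernel (l * (y - t)) := by
      fun_prop
    simpa using (hcont.tendsto 0).mono_left nhdsWithin_le_nhds

lemma integrable_triangle_mul_laplace (hf : Measurable f) (hB : ∀ t, |f t| ≤ B) (l y : ℝ) {d : ℝ}
    (hd : 0 < d) :
    Integrable (Function.uncurry fun w t : ℝ ↦
      ((1 - w : ℝ) : ℂ) * Complex.exp (Complex.I * (l * y * w : ℝ)) *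
        ((f t : ℂ) * Complex.exp (-(d + Complex.I * (l * w : ℝ)) * t)))
      ((volume.restrict (Ioc (0 : ℝ) 1)).prod (volume.restrict (Ioi (0 : ℝ)))) := by
  have hexp : IntegrableOn (fun t : ℝ ↦ B * Real.exp (-d * t)) (Ioi 0) :=
    (exp_neg_integrableOn_Ioi 0 hd).const_mul _
  have hone : IntegrableOn (fun _ : ℝ ↦ (1 : ℝ)) (Ioc (0 : ℝ) 1) := by simp
  refine (hone.mul_prod hexp).mono' (Measurable.aestronglyMeasurable (by fun_prop)) ?_
  rw [Measure.prod_restrict]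
  filter_upwards [ae_restrict_mem (measurableSet_Ioc.prod measurableSet_Ioi)] with p hp
  have hre : (-((d : ℂ) + Complex.I * ((l * p.1 : ℝ) : ℂ)) * (p.2 : ℂ)).re = -d * p.2 := by simp
  rw [Function.uncurry_def, norm_mul, norm_mul (f p.2 : ℂ), Complex.norm_real, Complex.norm_exp,
    hre]
  gcongr
  · exact norm_one_sub_mul_exp_le_one _ hp.1
  · exact hB _

lemma integral_mul_exp_mul_fejerKernel (hf : Measurable f) (hB : ∀ t, |f t| ≤ B)
    (hH : ∀ z : ℂ, 0 < z.re → ∫ t in Ioi (0 : ℝ), (f t : ℂ) * Complex.exp (-z * t) = H z)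
    {d : ℝ} (hd : 0 < d) :
    ∫ t in Ioi (0 : ℝ), f t * Real.exp (-d * t) * fejerKernel (l * (y - t)) =
      (segmentIntegral H l y d).re := by
  have hint := integrable_triangle_mul_laplace hf hB l y hd
  have hsegment : segmentIntegral H l y d = ∫ w in Ioc (0 : ℝ) 1, ∫ t in Ioi (0 : ℝ),
      ((1 - w : ℝ) : ℂ) * Complex.exp (Complex.I * (l * y * w : ℝ)) *
        ((f t : ℂ) * Complex.exp (-(d + Complex.I * (l * w : ℝ)) * t)) := by
    refine integral_congr_ae (ae_of_all _ fun w ↦ ?_)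
    simp only [integral_const_mul, hH (d + Complex.I * (l * w : ℝ)) (by simpa using hd)]
  have hpoint (w t : ℝ) : ((1 - w : ℝ) : ℂ) * Complex.exp (Complex.I * (l * y * w : ℝ)) *
        ((f t : ℂ) * Complex.exp (-(d + Complex.I * (l * w : ℝ)) * t)) =
      ((f t * Real.exp (-d * t) : ℝ) : ℂ) *
        (((1 - w : ℝ) : ℂ) * Complex.exp (Complex.I * (w * (l * (y - t)) : ℝ))) := by
    have hexp : Complex.exp (Complex.I * (l * y * w : ℝ)) *
        Complex.exp (-(d + Complex.I * (l * w : ℝ)) * t) =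
        Complex.exp (-d * t : ℝ) * Complex.exp (Complex.I * (w * (l * (y - t)) : ℝ)) := by
      rw [← Complex.exp_add, ← Complex.exp_add]
      push_cast
      ring_nf
    rw [Complex.ofReal_mul (f t), Complex.ofReal_exp]
    linear_combination ((1 - w : ℝ) : ℂ) * (f t : ℂ) * hexp
  have hre := integral_re hint.integral_prod_right
  simp only [Function.uncurry, RCLike.re_eq_complex_re] at hre
  rw [hsegment, integral_integral_swap hint, ← hre]
  refine integral_congr_ae (ae_of_all _ fun t ↦ ?_)
  simp only [hpoint, integral_const_mul, Complex.re_ofReal_mul, ← fejerKernel_eq_re]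

lemma integral_mul_fejerKernel_eq_re_segmentIntegral (hf : Measurable f) (hB : ∀ t, |f t| ≤ B)
    (hHc : ContinuousOn H {z | 0 ≤ z.re})
    (hH : ∀ z : ℂ, 0 < z.re → ∫ t in Ioi (0 : ℝ), (f t : ℂ) * Complex.exp (-z * t) = H z)
    (hl : 0 < l) :
    ∫ t in Ioi (0 : ℝ), f t * fejerKernel (l * (y - t)) = (segmentIntegral H l y 0).re := by
  refine tendsto_nhds_unique_of_eventuallyEq
    (tendsto_integral_mul_exp_mul_fejerKernel hf hB hl.ne')
    ((Complex.continuous_re.tendsto _).comp (tendsto_segmentIntegral_zero hHc hl.le)) ?_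
  filter_upwards [self_mem_nhdsWithin] with d hd
  exact integral_mul_exp_mul_fejerKernel hf hB hH hd

lemma tendsto_fejerAverage_indicator_zero (hf : Measurable f) (hB : ∀ t, |f t| ≤ B)
    (hHc : ContinuousOn H {z | 0 ≤ z.re})
    (hH : ∀ z : ℂ, 0 < z.re → ∫ t in Ioi (0 : ℝ), (f t : ℂ) * Complex.exp (-z * t) = H z)
    (hl : 0 < l) : Tendsto (fejerAverage ((Ici 0).indicator f) l) atTop (𝓝 0) := by
  have hlim := ((Complex.continuous_re.tendsto _).comp
    (tendsto_segmentIntegral_atTop H hl 0)).const_mul l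
  rw [Complex.zero_re, mul_zero] at hlim
  refine hlim.congr fun y ↦ ?_
  rw [Function.comp_apply, ← integral_mul_fejerKernel_eq_re_segmentIntegral hf hB hHc hH hl,
    fejerAverage_eq_mul_integral hl, ← integral_Ici_eq_integral_Ioi,
    ← integral_indicator measurableSet_Ici]
  simp only [indicator_mul_left]

/-- An Ingham-type Tauberian theorem for Laplace transforms. -/
theorem tendsto_of_laplace_continuousOn {C c : ℝ} (hf : Measurable f) (hf0 : ∀ t, 0 ≤ f t)
    (hfC : ∀ t, f t ≤ C) (hneg : ∀ t < 0, f t = 0) (hmono : Monotone fun t ↦ Real.exp t * f t)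
    (hHc : ContinuousOn H {z | 0 ≤ z.re})
    (hH : ∀ z : ℂ, 0 < z.re →
      ∫ t in Ioi (0 : ℝ), ((f t - c : ℝ) : ℂ) * Complex.exp (-z * t) = H z) :
    Tendsto f atTop (𝓝 c) := by
  refine tendsto_of_tendsto_fejerAverage hf hf0 hfC hmono fun l hl ↦ ?_
  have hbound (t : ℝ) : |f t - c| ≤ C + |c| :=
    (abs_sub _ _).trans (by gcongr; rw [abs_of_nonneg (hf0 t)]; exact hfC t)
  have hsplit : f = fun t ↦ (Ici 0).indicator (fun t ↦ f t - c) t +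
      (Ici 0).indicator (fun _ ↦ c) t := by
    ext t
    simp only [indicator, mem_Ici]
    split_ifs with ht
    · ring
    · rw [hneg t (not_le.mp ht), add_zero]
  have hsum := (tendsto_fejerAverage_indicator_zero (hf.sub_const c) hbound hHc hH hl).add
    (tendsto_fejerAverage_indicator_const c l)
  rw [zero_add] at hsum
  have hind (g : ℝ → ℝ) (t : ℝ) : |(Ici 0).indicator g t| ≤ |g t| :=
    norm_indicator_le_norm_self g t
  refine hsum.congr fun y ↦ ?_
  conv_rhs => rw [hsplit]
  exact (fejerAverage_add ((hf.sub_const c).indicator measurableSet_Ici)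
    (fun t ↦ (hind _ t).trans (hbound t)) (measurable_const.indicator measurableSet_Ici)
    (fun t ↦ hind (fun _ ↦ c) t) l y).symm

end LaplaceTransform

section WienerIkehara

/-- The partial sum of `u` up to `e ^ t`, divided by `e ^ t`. It vanishes for `t < 0` because `u 0`
is left out. -/
noncomputable def scaledSummatory (u : ℕ → ℝ) (t : ℝ) : ℝ :=
  (∑ k ∈ Finset.Icc 1 ⌊Real.exp t⌋₊, u k) * Real.exp (-t)

variable {u : ℕ → ℝ} {C : ℝ}

lemma scaledSummatory_nonneg (hu : ∀ n, 0 ≤ u n) (t : ℝ) : 0 ≤ scaledSummatory u t :=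
  mul_nonneg (Finset.sum_nonneg fun k _ ↦ hu k) (Real.exp_pos _).le

lemma scaledSummatory_of_neg {t : ℝ} (ht : t < 0) : scaledSummatory u t = 0 := by
  simp [scaledSummatory, Nat.floor_eq_zero.mpr (Real.exp_lt_one_iff.mpr ht)]

lemma scaledSummatory_log {n : ℕ} (hn : 0 < n) :
    scaledSummatory u (Real.log n) = (∑ k ∈ Finset.Icc 1 n, u k) / n := by
  have hn' : (0 : ℝ) < n := Nat.cast_pos.mpr hn
  rw [scaledSummatory, Real.exp_neg, Real.exp_log hn', Nat.floor_natCast, div_eq_mul_inv]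

lemma nonneg_of_sum_Icc_le (hu : ∀ n, 0 ≤ u n)
    (hC : ∀ n : ℕ, ∑ k ∈ Finset.Icc 1 n, u k ≤ C * n) : 0 ≤ C := by
  simpa using (Finset.sum_nonneg fun k _ ↦ hu k).trans (hC 1)

lemma scaledSummatory_le (hu : ∀ n, 0 ≤ u n)
    (hC : ∀ n : ℕ, ∑ k ∈ Finset.Icc 1 n, u k ≤ C * n) (t : ℝ) : scaledSummatory u t ≤ C := by
  rw [scaledSummatory, Real.exp_neg, ← div_eq_mul_inv, div_le_iff₀ (Real.exp_pos t)]
  exact (hC _).trans (mul_le_mul_of_nonneg_left (Nat.floor_le (Real.exp_pos t).le)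
    (nonneg_of_sum_Icc_le hu hC))

lemma monotone_sum_Icc_floor (hu : ∀ n, 0 ≤ u n) :
    Monotone fun x : ℝ ↦ ∑ k ∈ Finset.Icc 1 ⌊x⌋₊, u k := fun _ _ hxy ↦
  Finset.sum_le_sum_of_subset_of_nonneg (Finset.Icc_subset_Icc_right (Nat.floor_mono hxy))
    fun k _ _ ↦ hu k

lemma measurable_scaledSummatory (hu : ∀ n, 0 ≤ u n) : Measurable (scaledSummatory u) :=
  ((monotone_sum_Icc_floor hu).measurable.comp Real.measurable_exp).mul (by fun_prop)

lemma monotone_exp_mul_scaledSummatory (hu : ∀ n, 0 ≤ u n) :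
    Monotone fun t ↦ Real.exp t * scaledSummatory u t := by
  have hcancel (t : ℝ) : Real.exp t * scaledSummatory u t =
      ∑ k ∈ Finset.Icc 1 ⌊Real.exp t⌋₊, u k := by
    rw [scaledSummatory, mul_left_comm, ← Real.exp_add, add_neg_cancel, Real.exp_zero, mul_one]
  simp only [hcancel]
  exact (monotone_sum_Icc_floor hu).comp Real.exp_monotone

lemma one_add_ne_zero_of_re_nonneg {z : ℂ} (hz : 0 ≤ z.re) : 1 + z ≠ 0 :=
  Complex.slitPlane_ne_zero (.inl (by rw [Complex.add_re, Complex.one_re]; positivity))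

lemma integral_scaledSummatory_mul_exp (hu : ∀ n, 0 ≤ u n)
    (hC : ∀ n : ℕ, ∑ k ∈ Finset.Icc 1 n, u k ≤ C * n) {z : ℂ} (hz : 0 < z.re) :
    ∫ t in Ioi (0 : ℝ), (scaledSummatory u t : ℂ) * Complex.exp (-z * t) =
      LSeries (fun n ↦ (u n : ℂ)) (1 + z) / (1 + z) := by
  have hz1 : 1 + z ≠ 0 := one_add_ne_zero_of_re_nonneg hz.le
  have himage : Real.exp '' Ioi 0 = Ioi 1 := by rw [Real.image_exp_Ioi, Real.exp_zero]
  have hbig : (fun n : ℕ ↦ ∑ k ∈ Finset.Icc 1 n, u k) =O[atTop] fun n ↦ (n : ℝ) ^ (1 : ℝ) := by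
    refine Asymptotics.IsBigO.of_bound C (Eventually.of_forall fun n ↦ ?_)
    rw [Real.rpow_one, Real.norm_of_nonneg (Finset.sum_nonneg fun k _ ↦ hu k)]
    simpa using hC n
  rw [LSeries_eq_mul_integral_of_nonneg u zero_le_one (by simpa using hz) hbig hu,
    mul_div_cancel_left₀ _ hz1, ← himage,
    integral_image_eq_integral_abs_deriv_smul measurableSet_Ioi
      (fun t _ ↦ (Real.hasDerivAt_exp t).hasDerivWithinAt) Real.exp_injective.injOn]
  refine setIntegral_congr_fun measurableSet_Ioi fun t _ ↦ ?_
  have hexp : Complex.exp (-(t : ℂ)) * Complex.exp (-z * t) =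
      Complex.exp t * Complex.exp (t * -(1 + z + 1)) := by
    rw [← Complex.exp_add, ← Complex.exp_add]
    ring_nf
  rw [Real.abs_exp, Complex.real_smul,
    Complex.cpow_def_of_ne_zero (Complex.ofReal_ne_zero.mpr (Real.exp_pos t).ne'),
    ← Complex.ofReal_log (Real.exp_pos t).le, Real.log_exp, scaledSummatory]
  push_cast
  linear_combination (∑ k ∈ Finset.Icc 1 ⌊Real.exp t⌋₊, (u k : ℂ)) * hexp

lemma integral_scaledSummatory_sub_mul_exp (hu : ∀ n, 0 ≤ u n)
    (hC : ∀ n : ℕ, ∑ k ∈ Finset.Icc 1 n, u k ≤ C * n) (c : ℝ) {z : ℂ} (hz : 0 < z.re) :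
    ∫ t in Ioi (0 : ℝ), ((scaledSummatory u t - c : ℝ) : ℂ) * Complex.exp (-z * t) =
      LSeries (fun n ↦ (u n : ℂ)) (1 + z) / (1 + z) - c / z := by
  have hz' : (-z).re < 0 := by simpa using hz
  have hexp : IntegrableOn (fun t : ℝ ↦ Complex.exp (-z * t)) (Ioi 0) :=
    integrableOn_exp_mul_complex_Ioi hz' 0
  have hint : IntegrableOn (fun t : ℝ ↦ (scaledSummatory u t : ℂ) * Complex.exp (-z * t))
      (Ioi 0) := by
    refine hexp.bdd_mul (c := C)
      (measurable_scaledSummatory hu).complex_ofReal.aestronglyMeasurable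
      (ae_of_all _ fun t ↦ ?_)
    rw [Complex.norm_real, Real.norm_of_nonneg (scaledSummatory_nonneg hu t)]
    exact scaledSummatory_le hu hC t
  simp only [Complex.ofReal_sub, sub_mul]
  rw [integral_sub hint (hexp.const_mul _), integral_const_mul,
    integral_scaledSummatory_mul_exp hu hC hz, integral_exp_mul_complex_Ioi hz']
  simp [div_eq_mul_inv]

/-- The Wiener–Ikehara theorem, with a Chebyshev bound as an additional hypothesis. -/
theorem tendsto_sum_div_of_LSeries_eq_add (hu : ∀ n, 0 ≤ u n)
    (hC : ∀ n : ℕ, ∑ k ∈ Finset.Icc 1 n, u k ≤ C * n) {c : ℝ} {G : ℂ → ℂ}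
    (hG : ContinuousOn G {s | 1 ≤ s.re})
    (h : ∀ s : ℂ, 1 < s.re → LSeries (fun n ↦ (u n : ℂ)) s = c / (s - 1) + G s) :
    Tendsto (fun n : ℕ ↦ (∑ k ∈ Finset.Icc 1 n, u k) / n) atTop (𝓝 c) := by
  have hcont : ContinuousOn (fun z : ℂ ↦ (G (1 + z) - c) / (1 + z)) {z | 0 ≤ z.re} :=
    .div (.sub (hG.comp (by fun_prop) fun z hz ↦ by simpa using hz) continuousOn_const)
      (by fun_prop) fun z hz ↦ one_add_ne_zero_of_re_nonneg hz
  have hlaplace (z : ℂ) (hz : 0 < z.re) : ∫ t in Ioi (0 : ℝ),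
      ((scaledSummatory u t - c : ℝ) : ℂ) * Complex.exp (-z * t) = (G (1 + z) - c) / (1 + z) := by
    have hz0 : z ≠ 0 := by rintro rfl; simp at hz
    have hz1 := one_add_ne_zero_of_re_nonneg hz.le
    rw [integral_scaledSummatory_sub_mul_exp hu hC c hz, h _ (by simpa using hz),
      add_sub_cancel_left]
    field_simp
    ring
  have hlim := tendsto_of_laplace_continuousOn (measurable_scaledSummatory hu)
    (scaledSummatory_nonneg hu) (scaledSummatory_le hu hC) (fun t ↦ scaledSummatory_of_neg)
    (monotone_exp_mul_scaledSummatory hu) hcont hlaplace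
  refine (hlim.comp (Real.tendsto_log_atTop.comp tendsto_natCast_atTop_atTop)).congr' ?_
  filter_upwards [eventually_gt_atTop 0] with n hn
  exact scaledSummatory_log hn

end WienerIkehara

section QuarticSymbolOfTwo

variable {p a b : ℕ}

lemma exists_pow_four_eq_iff [Fact p.Prime] (hp : p % 4 = 1) {c : ZMod p} (hc : c ≠ 0) :
    (∃ w, w ^ 4 = c) ↔ c ^ (p / 4) = 1 := by
  have hhalf : p / 2 = 2 * (p / 4) := by omega
  constructor
  · rintro ⟨w, rfl⟩
    rw [← pow_mul, show 4 * (p / 4) = p - 1 by omega,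
      ZMod.pow_card_sub_one_eq_one (by simpa using hc)]
  · intro h
    obtain ⟨s, rfl⟩ := (ZMod.euler_criterion p hc).mpr
      (by rw [hhalf, mul_comm, pow_mul, h, one_pow])
    obtain ⟨r, rfl⟩ := (ZMod.euler_criterion p (left_ne_zero_of_mul hc)).mpr
      (by rw [hhalf, pow_mul, pow_two, h])
    exact ⟨r, by ring⟩

lemma coprime_of_sq_add_sq_eq_prime (hp : p.Prime) (h : a ^ 2 + b ^ 2 = p) : a.Coprime b := by
  have hdvd : a.gcd b * a.gcd b ∣ p := by
    rw [← pow_two, ← h]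
    exact dvd_add (pow_dvd_pow_of_dvd (Nat.gcd_dvd_left a b) 2)
      (pow_dvd_pow_of_dvd (Nat.gcd_dvd_right a b) 2)
  exact Nat.isUnit_iff.mp (hp.prime.squarefree _ hdvd)

lemma jacobiSym_left_sq_add_sq (hab : a.Coprime b) (ha : Odd a) (hmod : (a ^ 2 + b ^ 2) % 4 = 1) :
    jacobiSym a (a ^ 2 + b ^ 2) = 1 := by
  have hred : ((a ^ 2 + b ^ 2 : ℕ) : ℤ) % a = (b : ℤ) ^ 2 % a := by
    push_cast
    rw [pow_two (a : ℤ), add_comm, Int.add_mul_emod_self_left]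
  rw [← jacobiSym.quadratic_reciprocity_one_mod_four hmod ha, jacobiSym.mod_left' hred]
  exact jacobiSym.sq_one' (by simpa using hab.symm)

-- `2 * (a ^ 2 + b ^ 2) = (a - b) ^ 2 + (a + b) ^ 2` is a square modulo `a + b`.
lemma jacobiSym_add_sq_add_sq (hab : a.Coprime b) (hodd : Odd (a + b))
    (hmod : (a ^ 2 + b ^ 2) % 4 = 1) :
    jacobiSym (a + b : ℕ) (a ^ 2 + b ^ 2) = ZMod.χ₈ (a + b : ℕ) := by
  have hgcd : Int.gcd ((a : ℤ) - b) (a + b : ℕ) = 1 := by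
    have htwo : IsCoprime (2 : ℤ) (a + b : ℕ) :=
      mod_cast Nat.isCoprime_iff_coprime.mpr (Nat.coprime_two_left.mpr hodd)
    have ha : IsCoprime (a : ℤ) (a + b : ℕ) :=
      Nat.isCoprime_iff_coprime.mpr (by simpa using hab)
    rw [← Int.isCoprime_iff_gcd_eq_one,
      show (a : ℤ) - b = 2 * a + (a + b : ℕ) * (-1) by push_cast; ring]
    exact (htwo.mul_left ha).add_mul_left_left _
  have hred : 2 * ((a ^ 2 + b ^ 2 : ℕ) : ℤ) % (a + b : ℕ) = ((a : ℤ) - b) ^ 2 % (a + b : ℕ) := by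
    rw [show 2 * ((a ^ 2 + b ^ 2 : ℕ) : ℤ) =
      ((a : ℤ) - b) ^ 2 + (a + b : ℕ) * (a + b : ℕ) by push_cast; ring, Int.add_mul_emod_self_left]
  have hprod : jacobiSym 2 (a + b) * jacobiSym (a ^ 2 + b ^ 2 : ℕ) (a + b) = 1 := by
    rw [← jacobiSym.mul_left, jacobiSym.mod_left' hred]
    exact jacobiSym.sq_one' hgcd
  rw [← jacobiSym.quadratic_reciprocity_one_mod_four hmod hodd, ← jacobiSym.at_two hodd]
  rcases Int.mul_eq_one_iff_eq_one_or_neg_one.mp hprod with ⟨h, h'⟩ | ⟨h, h'⟩ <;> rw [h, h']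

-- Raise `(a + b) ^ 2 ≡ 2 * (b / a) * a ^ 2`, where `b / a` is a square root of `-1`, to the power
-- `p / 4`.
lemma two_pow_div_four_of_sq_add_sq [Fact p.Prime] (hp : p % 8 = 1) (h : a ^ 2 + b ^ 2 = p)
    (ha : Odd a) : (2 : ZMod p) ^ (p / 4) = (-1) ^ (p / 8) * (ZMod.χ₈ (a + b : ℕ) : ℤ) := by
  have hcop := coprime_of_sq_add_sq_eq_prime Fact.out h
  have hb : Even b := by
    by_contra hb
    have := (ha.pow (n := 2)).add_odd ((Nat.not_even_iff_odd.mp hb).pow (n := 2))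
    rw [h, Nat.even_iff] at this
    omega
  have hapow : (a : ZMod p) ^ (p / 2) = 1 := by
    have hJ := jacobiSym_left_sq_add_sq hcop ha (by omega)
    rw [h, ← jacobiSym.legendreSym.to_jacobiSym] at hJ
    simpa [hJ] using (legendreSym.eq_pow p a).symm
  have habpow : ((a : ZMod p) + b) ^ (p / 2) = (ZMod.χ₈ (a + b : ℕ) : ℤ) := by
    have hJ := jacobiSym_add_sq_add_sq hcop (ha.add_even hb) (by omega)
    rw [h, ← jacobiSym.legendreSym.to_jacobiSym] at hJ
    rw [← hJ, legendreSym.eq_pow]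
    push_cast
    rfl
  have ha0 : (a : ZMod p) ≠ 0 := by
    intro h0
    rw [h0, zero_pow (by have := (Fact.out : p.Prime).two_le; omega)] at hapow
    exact zero_ne_one hapow
  have hsum : (a : ZMod p) ^ 2 + (b : ZMod p) ^ 2 = 0 := by
    exact_mod_cast (congrArg (Nat.cast : ℕ → ZMod p) h).trans (ZMod.natCast_self p)
  have hroot : ((b : ZMod p) / a) ^ 2 = -1 := by
    field_simp
    linear_combination hsum
  have hsq : ((a : ZMod p) + b) ^ 2 = 2 * ((b : ZMod p) / a) * (a : ZMod p) ^ 2 := by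
    field_simp
    linear_combination hsum
  have hhalf : p / 2 = 2 * (p / 4) := by omega
  have hquarter : p / 4 = 2 * (p / 8) := by omega
  have hpow : ((ZMod.χ₈ (a + b : ℕ) : ℤ) : ZMod p) = 2 ^ (p / 4) * (-1) ^ (p / 8) := by
    rw [← habpow, hhalf, pow_mul, hsq, mul_pow, mul_pow, ← pow_mul (a : ZMod p), ← hhalf, hapow,
      mul_one, ← hroot, ← pow_mul, ← hquarter]
  rw [hpow, mul_left_comm, ← mul_pow, neg_one_mul, neg_neg, one_pow, mul_one]

lemma neg_one_pow_mul_χ₈_add_four_mul (ha : Odd a) (c : ℕ) :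
    (-1) ^ ((a ^ 2 + (4 * c) ^ 2) / 8) * ZMod.χ₈ (a + 4 * c : ℕ) = (-1) ^ c := by
  have hexp : (a ^ 2 + (4 * c) ^ 2) / 8 = 2 * (4 * (a / 8) ^ 2 + (a / 8) * (a % 8) + c ^ 2) +
      (a % 8) ^ 2 / 8 := by
    have hdiv : a ^ 2 + (4 * c) ^ 2 =
        (a % 8) ^ 2 + 8 * (2 * (4 * (a / 8) ^ 2 + (a / 8) * (a % 8) + c ^ 2)) := by
      conv_lhs => rw [← Nat.div_add_mod a 8]
      ring
    rw [hdiv, Nat.add_mul_div_left _ _ (by norm_num), add_comm]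
  have hχ : ((a + 4 * c : ℕ) : ZMod 8) = (a % 8 + 4 * (c % 2) : ℕ) := by
    rw [ZMod.natCast_eq_natCast_iff']
    omega
  rw [hexp, hχ, pow_add, pow_mul, neg_one_sq, one_pow, one_mul, neg_one_pow_eq_pow_mod_two c]
  have ha8 : a % 8 = 1 ∨ a % 8 = 3 ∨ a % 8 = 5 ∨ a % 8 = 7 := by
    have := Nat.odd_iff.mp ha
    omega
  rcases ha8 with h | h | h | h <;> rcases Nat.mod_two_eq_zero_or_one c with h' | h' <;>
    rw [h, h'] <;> decide

lemma exists_pow_four_eq_two_iff_of_sq_add_sq [Fact p.Prime] (hp : p % 8 = 1) {c : ℕ}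
    (h : a ^ 2 + (4 * c) ^ 2 = p) : (∃ w : ZMod p, w ^ 4 = 2) ↔ Even c := by
  have hp2 : p ≠ 2 := by omega
  have htwo : (2 : ZMod p) ≠ 0 := Ring.two_ne_zero (by rwa [ZMod.ringChar_zmod_n])
  have ha : Odd a := by
    rw [← Nat.odd_pow_iff two_ne_zero, Nat.odd_iff]
    have : (4 * c) ^ 2 = 2 * (8 * c ^ 2) := by ring
    omega
  have hneg : (-1 : ZMod p) ≠ 1 := by
    have : Fact (2 < p) := ⟨(Fact.out : p.Prime).two_le.lt_of_ne' hp2⟩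
    exact ZMod.neg_one_ne_one
  have hpow : (2 : ZMod p) ^ (p / 4) = (-1) ^ c := by
    have hval := neg_one_pow_mul_χ₈_add_four_mul ha c
    rw [h] at hval
    rw [two_pow_div_four_of_sq_add_sq hp h ha]
    exact_mod_cast congrArg (Int.cast : ℤ → ZMod p) hval
  rw [exists_pow_four_eq_iff (by omega) htwo, hpow]
  rcases Nat.even_or_odd c with hc | hc
  · simp [hc]
  · simp [hc.neg_one_pow, hneg, Nat.not_even_iff_odd.mpr hc]

end QuarticSymbolOfTwo

section PrimaryGaussianIntegers

/-- The norm of a Gaussian integer, as a natural number. -/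
def absNorm : GaussianInt →* ℕ := Int.natAbsHom.toMonoidHom.comp Zsqrtd.normMonoidHom

/-- A Gaussian integer is primary if it is congruent to `1` modulo `2 + 2i`. Every Gaussian integer
of odd norm has exactly one primary associate. -/
def IsPrimary (z : GaussianInt) : Prop := (⟨2, 2⟩ : GaussianInt) ∣ z - 1

/-- The function sending a primary Gaussian integer `a + bi` to `i ^ (b / 2)`, the inverse of the
quartic residue symbol of `2`. It is multiplicative on primary integers only; for odd `b` the
exponent is rounded down. -/
noncomputable def heckeChar (z : GaussianInt) : ℂ := Complex.I ^ (z.im / 2)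

variable {z w : GaussianInt}

lemma coe_absNorm (z : GaussianInt) : (absNorm z : ℤ) = z.re ^ 2 + z.im ^ 2 :=
  (Int.natAbs_of_nonneg (GaussianInt.norm_nonneg z)).trans (by rw [Zsqrtd.norm_def]; ring)

lemma absNorm_eq_one_iff : absNorm z = 1 ↔ IsUnit z := Zsqrtd.norm_eq_one_iff

lemma absNorm_natCast (n : ℕ) : absNorm n = n ^ 2 := by
  zify
  simp [coe_absNorm]

lemma absNorm_star (z : GaussianInt) : absNorm (star z) = absNorm z :=
  congrArg Int.natAbs (Zsqrtd.norm_conj z)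

lemma absNorm_pos (hz : z ≠ 0) : 0 < absNorm z :=
  Int.natAbs_pos.mpr (GaussianInt.norm_pos.mpr hz).ne'

lemma two_le_absNorm (hz : Prime z) : 2 ≤ absNorm z :=
  Nat.two_le_iff _ |>.mpr ⟨(absNorm_pos hz.ne_zero).ne', absNorm_eq_one_iff.not.mpr hz.not_isUnit⟩

lemma isPrimary_iff : IsPrimary z ↔ Even z.im ∧ 4 ∣ z.re + z.im - 1 := by
  constructor
  · rintro ⟨⟨x, y⟩, h⟩
    have hre := congrArg Zsqrtd.re h
    have him := congrArg Zsqrtd.im h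
    simp only [Zsqrtd.re_sub, Zsqrtd.im_sub, Zsqrtd.re_one, Zsqrtd.im_one, Zsqrtd.re_mul,
      Zsqrtd.im_mul] at hre him
    rw [Int.even_iff]
    omega
  · rintro ⟨⟨m, hm⟩, t, ht⟩
    refine ⟨⟨t, m - t⟩, Zsqrtd.ext ?_ ?_⟩ <;>
      simp only [Zsqrtd.re_sub, Zsqrtd.im_sub, Zsqrtd.re_one, Zsqrtd.im_one, Zsqrtd.re_mul,
        Zsqrtd.im_mul] <;> omega

lemma IsPrimary.exists_im_eq_two_mul (hz : IsPrimary z) :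
    ∃ m t : ℤ, z.im = 2 * m ∧ z.re = 1 - 2 * m + 4 * t := by
  obtain ⟨⟨m, hm⟩, t, ht⟩ := isPrimary_iff.mp hz
  exact ⟨m, t, by omega, by omega⟩

lemma isPrimary_one : IsPrimary 1 := by simp [IsPrimary]

lemma IsPrimary.mul_iff (hz : IsPrimary z) : IsPrimary (z * w) ↔ IsPrimary w := by
  have hsub : z * w - 1 = (z - 1) * w + (w - 1) := by ring
  rw [IsPrimary, hsub]
  exact dvd_add_right (dvd_mul_of_dvd_left hz w)

lemma IsPrimary.pow (hz : IsPrimary z) (k : ℕ) : IsPrimary (z ^ k) :=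
  hz.trans (sub_one_dvd_pow_sub_one z k)

lemma IsPrimary.ne_zero (hz : IsPrimary z) : z ≠ 0 := by
  rintro rfl
  simpa using (isPrimary_iff.mp hz).2

lemma IsPrimary.star (hz : IsPrimary z) : IsPrimary (star z) := by
  obtain ⟨m, t, him, hre⟩ := hz.exists_im_eq_two_mul
  rw [isPrimary_iff, Zsqrtd.re_star, Zsqrtd.im_star, Int.even_iff]
  omega

lemma IsPrimary.absNorm_modEq_eight (hz : IsPrimary z) : absNorm z ≡ 1 + 2 * z.im [ZMOD 8] := by
  obtain ⟨m, t, him, hre⟩ := hz.exists_im_eq_two_mul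
  refine Int.ModEq.symm (Int.modEq_iff_dvd.mpr ⟨m ^ 2 + 2 * t ^ 2 - m + t - 2 * m * t, ?_⟩)
  rw [coe_absNorm, him, hre]
  ring

lemma IsPrimary.absNorm_mod_four (hz : IsPrimary z) : absNorm z % 4 = 1 := by
  obtain ⟨m, hm⟩ := (isPrimary_iff.mp hz).1
  have hmod := hz.absNorm_modEq_eight
  rw [Int.ModEq] at hmod
  omega

lemma exists_isUnit_isPrimary_mul (hz : Odd (absNorm z)) : ∃ u, IsUnit u ∧ IsPrimary (u * z) := by
  have hodd : ¬ Even (z.re + z.im) := by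
    rw [← Int.odd_coe_nat, coe_absNorm, ← Int.not_even_iff_odd] at hz
    simpa [Int.even_add, Int.even_pow] using hz
  have hI : IsUnit (⟨0, 1⟩ : GaussianInt) := absNorm_eq_one_iff.mp (by decide)
  have hcases : IsPrimary (1 * z) ∨ IsPrimary (-1 * z) ∨ IsPrimary (⟨0, 1⟩ * z) ∨
      IsPrimary (-⟨0, 1⟩ * z) := by
    simp only [isPrimary_iff, Int.even_iff, Zsqrtd.re_mul, Zsqrtd.im_mul, Zsqrtd.re_neg,
      Zsqrtd.im_neg, Zsqrtd.re_one, Zsqrtd.im_one] at hodd ⊢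
    omega
  rcases hcases with h | h | h | h
  exacts [⟨1, isUnit_one, h⟩, ⟨-1, isUnit_one.neg, h⟩, ⟨_, hI, h⟩, ⟨_, hI.neg, h⟩]

lemma IsPrimary.eq_one_of_isUnit (hz : IsPrimary z) (hu : IsUnit z) : z = 1 := by
  obtain ⟨⟨m, hm⟩, hre⟩ := isPrimary_iff.mp hz
  have hnorm : (1 : ℤ) = z.re ^ 2 + z.im ^ 2 := by
    rw [← coe_absNorm, absNorm_eq_one_iff.mpr hu, Nat.cast_one]
  have him_abs := abs_le_of_sq_le_sq' (a := z.im) (b := 1) (by nlinarith) zero_le_one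
  have hre_abs := abs_le_of_sq_le_sq' (a := z.re) (b := 1) (by nlinarith) zero_le_one
  have him : z.im = 0 := by omega
  have : z.re ≠ 0 := by
    intro h
    simp [h, him] at hnorm
  exact Zsqrtd.ext (by rw [Zsqrtd.re_one]; omega) him

lemma IsPrimary.eq_of_associated (hz : IsPrimary z) (hw : IsPrimary w) (h : Associated z w) :
    z = w := by
  obtain ⟨u, rfl⟩ := h
  rw [(hz.mul_iff.mp hw).eq_one_of_isUnit u.isUnit, mul_one]

lemma IsPrimary.exists_eq_prime_mul (hz : IsPrimary z) (hu : ¬ IsUnit z) :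
    ∃ π β, IsPrimary π ∧ Prime π ∧ IsPrimary β ∧ z = π * β := by
  obtain ⟨q, hq, γ, rfl⟩ := WfDvdMonoid.exists_irreducible_factor hu hz.ne_zero
  have hodd : Odd (absNorm (q * γ)) := Nat.odd_iff.mpr (by have := hz.absNorm_mod_four; omega)
  rw [map_mul] at hodd
  obtain ⟨-, ⟨v, rfl⟩, hv⟩ := exists_isUnit_isPrimary_mul (Nat.odd_mul.mp hodd).1
  have hfactor : q * γ = v * q * ((v⁻¹ : GaussianIntˣ) * γ) := by
    rw [mul_mul_mul_comm, v.mul_inv, one_mul]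
  exact ⟨v * q, (v⁻¹ : GaussianIntˣ) * γ, hv,
    (associated_unit_mul_left q _ v.isUnit).prime_iff.mpr hq.prime,
    hv.mul_iff.mp (hfactor ▸ hz), hfactor⟩

lemma I_zpow_add_two (m : ℤ) : Complex.I ^ (m + 2) = -Complex.I ^ m := by
  rw [zpow_add₀ Complex.I_ne_zero, show (2 : ℤ) = (2 : ℕ) from rfl, zpow_natCast, Complex.I_sq,
    mul_neg_one]

lemma I_zpow_two_mul (m : ℤ) : Complex.I ^ (2 * m) = (-1) ^ m := by
  rw [zpow_mul, show (2 : ℤ) = (2 : ℕ) from rfl, zpow_natCast, Complex.I_sq]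

lemma heckeChar_one : heckeChar 1 = 1 := by simp [heckeChar]

lemma norm_heckeChar (z : GaussianInt) : ‖heckeChar z‖ = 1 := by simp [heckeChar]

lemma heckeChar_mul (hz : IsPrimary z) (hw : IsPrimary w) :
    heckeChar (z * w) = heckeChar z * heckeChar w := by
  obtain ⟨m, t, him, hre⟩ := hz.exists_im_eq_two_mul
  obtain ⟨n, r, him', hre'⟩ := hw.exists_im_eq_two_mul
  have hexp : (z.re * w.im + z.im * w.re) / 2 = m + n + 2 * (2 * (t * n + m * r - m * n)) := by
    rw [him, him', hre, hre']
    exact Int.ediv_eq_of_eq_mul_right two_ne_zero (by ring)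
  rw [heckeChar, heckeChar, heckeChar, Zsqrtd.im_mul, hexp, him, him',
    Int.mul_ediv_cancel_left _ two_ne_zero, Int.mul_ediv_cancel_left _ two_ne_zero,
    zpow_add₀ Complex.I_ne_zero, zpow_add₀ Complex.I_ne_zero, I_zpow_two_mul, zpow_mul]
  norm_num

lemma heckeChar_add_four (a b : ℤ) : heckeChar ⟨a, b + 4⟩ = -heckeChar ⟨a, b⟩ := by
  rw [heckeChar, show (b + 4) / 2 = b / 2 + 2 by omega, I_zpow_add_two, heckeChar]

lemma heckeChar_star_of_absNorm_mod_eight (hz : IsPrimary z) (h : absNorm z % 8 = 5) :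
    heckeChar (star z) = -heckeChar z := by
  obtain ⟨m, t, him, hre⟩ := hz.exists_im_eq_two_mul
  have hmod := hz.absNorm_modEq_eight
  rw [Int.ModEq] at hmod
  obtain ⟨k, rfl⟩ : ∃ k, m = 2 * k + 1 := ⟨m / 2, by omega⟩
  have hstar : (star z).im / 2 = 2 * (-k - 1) + 1 := by
    rw [Zsqrtd.im_star]
    omega
  have hz' : z.im / 2 = 2 * k + 1 := by omega
  rw [heckeChar, heckeChar, hstar, hz', zpow_add₀ Complex.I_ne_zero, zpow_add₀ Complex.I_ne_zero,
    I_zpow_two_mul, I_zpow_two_mul, zpow_sub₀ (by norm_num), zpow_neg, zpow_one, ← inv_zpow,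
    inv_neg_one]
  ring

lemma heckeChar_of_absNorm_eq_prime {p : ℕ} [Fact p.Prime] [Decidable (∃ w : ZMod p, w ^ 4 = 2)]
    (hp : p % 8 = 1) (hz : IsPrimary z) (hzp : absNorm z = p) :
    heckeChar z = if ∃ w : ZMod p, w ^ 4 = 2 then 1 else -1 := by
  have hmod := hz.absNorm_modEq_eight
  rw [Int.ModEq] at hmod
  have heven := (isPrimary_iff.mp hz).1
  rw [Int.even_iff] at heven
  obtain ⟨l, hl⟩ : ∃ l, z.im = 4 * l := ⟨z.im / 4, by omega⟩
  have hsum : z.re.natAbs ^ 2 + (4 * l.natAbs) ^ 2 = p := by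
    have := coe_absNorm z
    zify
    rw [mul_pow, sq_abs, sq_abs, ← hzp, this, hl, mul_pow]
  have hchar : heckeChar z = (-1) ^ l := by
    rw [heckeChar, hl, show 4 * l / 2 = 2 * l by omega, I_zpow_two_mul]
  simp only [hchar, exists_pow_four_eq_two_iff_of_sq_add_sq hp hsum, Int.natAbs_even]
  split_ifs with h
  · exact h.neg_one_zpow
  · exact (Int.not_even_iff_odd.mp h).neg_one_zpow

end PrimaryGaussianIntegers

section HeckeCoefficients

variable {z w : GaussianInt} {n : ℕ}

lemma finite_absNorm_le (N : ℕ) : {z | absNorm z ≤ N}.Finite := by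
  refine Set.Finite.of_injOn (f := fun z ↦ (z.re, z.im)) (t := Icc (-(N : ℤ)) N ×ˢ Icc (-(N : ℤ)) N)
    (fun z hz ↦ ?_) (fun z _ w _ h ↦ Zsqrtd.ext (congrArg Prod.fst h) (congrArg Prod.snd h))
    ((finite_Icc _ _).prod (finite_Icc _ _))
  have hz' : z.re ^ 2 + z.im ^ 2 ≤ N := by
    rw [← coe_absNorm]
    exact_mod_cast hz
  have hre := Int.natAbs_le_self_sq z.re
  have him := Int.natAbs_le_self_sq z.im
  simp only [Set.mem_prod, Set.mem_Icc]
  have := sq_nonneg z.re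
  have := sq_nonneg z.im
  omega

/-- The primary Gaussian integers of norm at most `N`. -/
noncomputable def primaryUpTo (N : ℕ) : Finset GaussianInt :=
  ((finite_absNorm_le N).subset (inter_subset_right (s := {z | IsPrimary z}))).toFinset

lemma mem_primaryUpTo {N : ℕ} : z ∈ primaryUpTo N ↔ IsPrimary z ∧ absNorm z ≤ N := by
  simp [primaryUpTo]

/-- The primary Gaussian integers of norm `n`. -/
noncomputable def primaryOfNorm (n : ℕ) : Finset GaussianInt :=
  (primaryUpTo n).filter (absNorm · = n)

lemma mem_primaryOfNorm : z ∈ primaryOfNorm n ↔ IsPrimary z ∧ absNorm z = n := by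
  simp only [primaryOfNorm, Finset.mem_filter, mem_primaryUpTo]
  exact ⟨fun h ↦ ⟨h.1.1, h.2⟩, fun h ↦ ⟨⟨h.1, h.2.le⟩, h.2⟩⟩

open scoped Classical in
/-- The primary divisors of a nonzero Gaussian integer. -/
noncomputable def primaryDivisors (z : GaussianInt) : Finset GaussianInt :=
  (primaryUpTo (absNorm z)).filter (· ∣ z)

lemma absNorm_le_of_dvd (hz : z ≠ 0) (h : w ∣ z) : absNorm w ≤ absNorm z :=
  Nat.le_of_dvd (absNorm_pos hz) (map_dvd absNorm h)

lemma mem_primaryDivisors (hz : z ≠ 0) : w ∈ primaryDivisors z ↔ IsPrimary w ∧ w ∣ z := by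
  simp only [primaryDivisors, Finset.mem_filter, mem_primaryUpTo]
  exact ⟨fun h ↦ ⟨h.1.1, h.2⟩, fun h ↦ ⟨⟨h.1, absNorm_le_of_dvd hz h.2⟩, h.2⟩⟩

lemma sum_mul_sum_primaryOfNorm {R : Type*} [CommSemiring R] (f g : GaussianInt → R) (n : ℕ) :
    ∑ x ∈ n.divisorsAntidiagonal,
      (∑ d ∈ primaryOfNorm x.1, f d) * ∑ w ∈ primaryOfNorm x.2, g w =
    ∑ z ∈ primaryOfNorm n, ∑ d ∈ primaryDivisors z, f d * g (z / d) := by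
  simp only [Finset.sum_mul_sum, ← Finset.sum_product', Finset.sum_sigma']
  have hleft : ∀ x ∈ n.divisorsAntidiagonal.sigma
      fun x ↦ primaryOfNorm x.1 ×ˢ primaryOfNorm x.2, x.2.1 * x.2.2 / x.2.1 = x.2.2 ∧
      absNorm x.2.1 = x.1.1 ∧ absNorm x.2.2 = x.1.2 := by
    simp only [Finset.mem_sigma, Finset.mem_product, mem_primaryOfNorm]
    exact fun x h ↦ ⟨mul_div_cancel_left₀ _ h.2.1.1.ne_zero, h.2.1.2, h.2.2.2⟩
  refine Finset.sum_bij' (fun x _ ↦ ⟨x.2.1 * x.2.2, x.2.1⟩)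
    (fun y _ ↦ ⟨(absNorm y.2, absNorm (y.1 / y.2)), y.2, y.1 / y.2⟩) ?_ ?_ ?_ ?_ ?_
  · rintro ⟨⟨k, l⟩, d, w⟩ h
    simp only [Finset.mem_sigma, Nat.mem_divisorsAntidiagonal, Finset.mem_product,
      mem_primaryOfNorm] at h ⊢
    obtain ⟨⟨hkl, -⟩, ⟨hd, rfl⟩, hw, rfl⟩ := h
    have hdw := hd.mul_iff.mpr hw
    exact ⟨⟨hdw, by rw [map_mul, hkl]⟩,
      (mem_primaryDivisors hdw.ne_zero).mpr ⟨hd, dvd_mul_right d w⟩⟩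
  · rintro ⟨z, d⟩ h
    simp only [Finset.mem_sigma, mem_primaryOfNorm] at h
    obtain ⟨⟨hz, rfl⟩, hdz⟩ := h
    obtain ⟨hd, w, rfl⟩ := (mem_primaryDivisors hz.ne_zero).mp hdz
    have hw := hd.mul_iff.mp hz
    simp [mul_div_cancel_left₀ w hd.ne_zero, mem_primaryOfNorm, hd, hw,
      (absNorm_pos hd.ne_zero).ne', (absNorm_pos hw.ne_zero).ne']
  · rintro ⟨⟨k, l⟩, d, w⟩ h
    obtain ⟨hdiv, hk, hl⟩ := hleft _ h
    simp only at hdiv hk hl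
    simp only [hdiv, hk, hl]
  · rintro ⟨z, d⟩ h
    simp only [Finset.mem_sigma, mem_primaryOfNorm] at h
    obtain ⟨w, rfl⟩ := ((mem_primaryDivisors h.1.1.ne_zero).mp h.2).2
    have hd := ((mem_primaryDivisors h.1.1.ne_zero).mp h.2).1
    simp only [mul_div_cancel_left₀ w hd.ne_zero]
  · rintro x h
    simp only [(hleft x h).1]

open scoped Classical in
/-- The von Mangoldt function of the Gaussian integers, restricted to primary ones: it takes the
value `log (absNorm π)` at the positive powers of a primary prime `π` and vanishes elsewhere. -/
noncomputable def gaussianVonMangoldt (z : GaussianInt) : ℝ :=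
  if h : ∃ π, IsPrimary π ∧ Prime π ∧ ∃ j, 0 < j ∧ π ^ j = z then Real.log (absNorm h.choose) else 0

lemma IsPrimary.eq_of_dvd_pow (hw : IsPrimary w) (hz : IsPrimary z) (hw' : Prime w)
    (hz' : Prime z) {j : ℕ} (h : w ∣ z ^ j) : w = z :=
  hw.eq_of_associated hz (hw'.associated_of_dvd hz' (hw'.dvd_of_dvd_pow h))

lemma gaussianVonMangoldt_pow (hz : IsPrimary z) (hz' : Prime z) {j : ℕ} (hj : 0 < j) :
    gaussianVonMangoldt (z ^ j) = Real.log (absNorm z) := by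
  have h : ∃ π, IsPrimary π ∧ Prime π ∧ ∃ k, 0 < k ∧ π ^ k = z ^ j := ⟨z, hz, hz', j, hj, rfl⟩
  obtain ⟨hπ, hπ', k, hk, hpow⟩ := h.choose_spec
  rw [gaussianVonMangoldt, dif_pos h,
    hπ.eq_of_dvd_pow hz hπ' hz' (hpow ▸ dvd_pow_self h.choose hk.ne')]

lemma exists_pow_eq_of_gaussianVonMangoldt_ne_zero (h : gaussianVonMangoldt z ≠ 0) :
    ∃ π, IsPrimary π ∧ Prime π ∧ ∃ j, 0 < j ∧ π ^ j = z := by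
  contrapose! h
  exact dif_neg (by push Not; exact h)

lemma gaussianVonMangoldt_of_isUnit (hz : IsUnit z) : gaussianVonMangoldt z = 0 := by
  by_contra hne
  obtain ⟨π, -, hπ, j, hj, rfl⟩ := exists_pow_eq_of_gaussianVonMangoldt_ne_zero hne
  exact hπ.not_isUnit ((isUnit_pow_iff hj.ne').mp hz)

lemma gaussianVonMangoldt_nonneg (z : GaussianInt) : 0 ≤ gaussianVonMangoldt z := by
  rw [gaussianVonMangoldt]
  split_ifs
  exacts [Real.log_natCast_nonneg _, le_rfl]

lemma sum_gaussianVonMangoldt_prime_mul {π : GaussianInt} (hπ : IsPrimary π) (hπ' : Prime π)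
    (hz : IsPrimary z) : ∑ d ∈ primaryDivisors (π * z), gaussianVonMangoldt d =
      Real.log (absNorm π) + ∑ d ∈ primaryDivisors z, gaussianVonMangoldt d := by
  have hπz := hπ.mul_iff.mpr hz
  set k := multiplicity π z
  have hfin : FiniteMultiplicity π z := FiniteMultiplicity.of_prime_left hπ' hz.ne_zero
  have hpow : ¬ π ^ (k + 1) ∣ z := hfin.not_pow_dvd_of_multiplicity_lt k.lt_succ_self
  have hnotMem : π ^ (k + 1) ∉ primaryDivisors z :=
    fun h ↦ hpow ((mem_primaryDivisors hz.ne_zero).mp h).2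
  rw [← gaussianVonMangoldt_pow hπ hπ' k.succ_pos, ← Finset.sum_insert hnotMem]
  refine (Finset.sum_subset (fun d hd ↦ ?_) fun d hd hd' ↦ ?_).symm
  · rw [mem_primaryDivisors hπz.ne_zero]
    rcases Finset.mem_insert.mp hd with rfl | hd
    · exact ⟨hπ.pow _, by rw [pow_succ']; exact mul_dvd_mul_left π (pow_multiplicity_dvd π z)⟩
    · rw [mem_primaryDivisors hz.ne_zero] at hd
      exact ⟨hd.1, hd.2.mul_left π⟩
  · by_contra hne
    obtain ⟨ϖ, hϖ, hϖ', j, hj, rfl⟩ := exists_pow_eq_of_gaussianVonMangoldt_ne_zero hne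
    rw [mem_primaryDivisors hπz.ne_zero] at hd
    rw [Finset.mem_insert, mem_primaryDivisors hz.ne_zero, not_or, not_and] at hd'
    have hndvd := hd'.2 hd.1
    by_cases hdvd : ϖ ∣ π
    · obtain rfl := hϖ.eq_of_associated hπ (hϖ'.associated_of_dvd hπ' hdvd)
      obtain ⟨i, rfl⟩ := Nat.exists_eq_add_of_le' hj
      rw [pow_succ' ϖ i, mul_dvd_mul_iff_left hπ'.ne_zero,
        hfin.pow_dvd_iff_le_multiplicity] at hd
      rw [hfin.pow_dvd_iff_le_multiplicity] at hndvd
      exact hd'.1 (by congr 1; omega)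
    · exact hndvd (hϖ'.pow_dvd_of_dvd_mul_left j hdvd hd.2)

theorem sum_gaussianVonMangoldt (hz : IsPrimary z) :
    ∑ d ∈ primaryDivisors z, gaussianVonMangoldt d = Real.log (absNorm z) := by
  induction h : absNorm z using Nat.strong_induction_on generalizing z with
  | _ n ih =>
  by_cases hu : IsUnit z
  · obtain rfl := hz.eq_one_of_isUnit hu
    rw [← h, map_one, Nat.cast_one, Real.log_one]
    exact Finset.sum_eq_zero fun d hd ↦ gaussianVonMangoldt_of_isUnit
      (isUnit_of_dvd_one ((mem_primaryDivisors one_ne_zero).mp hd).2)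
  · obtain ⟨π, β, hπ, hπ', hβ, rfl⟩ := hz.exists_eq_prime_mul hu
    have hlt : absNorm β < n := by
      rw [← h, map_mul]
      exact lt_mul_of_one_lt_left (absNorm_pos hβ.ne_zero) (two_le_absNorm hπ')
    rw [sum_gaussianVonMangoldt_prime_mul hπ hπ' hβ, ih _ hlt hβ rfl, ← h, map_mul, Nat.cast_mul,
      Real.log_mul]
    · exact_mod_cast (absNorm_pos hπ.ne_zero).ne'
    · exact_mod_cast (absNorm_pos hβ.ne_zero).ne'

/-- The coefficients of the Hecke `L`-series `∑ heckeChar z / (absNorm z) ^ s`, the sum running over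
the primary Gaussian integers. -/
noncomputable def heckeCoeff (n : ℕ) : ℂ := ∑ z ∈ primaryOfNorm n, heckeChar z

/-- The coefficients of minus the logarithmic derivative of the `L`-series of `heckeCoeff`. -/
noncomputable def heckeLambda (n : ℕ) : ℂ :=
  ∑ z ∈ primaryOfNorm n, gaussianVonMangoldt z * heckeChar z

theorem sum_heckeLambda_mul_heckeCoeff (n : ℕ) :
    ∑ x ∈ n.divisorsAntidiagonal, heckeLambda x.1 * heckeCoeff x.2 =
      heckeCoeff n * (Real.log n : ℂ) := by
  simp only [heckeLambda, heckeCoeff]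
  rw [sum_mul_sum_primaryOfNorm, Finset.sum_mul]
  refine Finset.sum_congr rfl fun z hzn ↦ ?_
  obtain ⟨hz, rfl⟩ := mem_primaryOfNorm.mp hzn
  rw [← sum_gaussianVonMangoldt hz, Complex.ofReal_sum, Finset.mul_sum]
  refine Finset.sum_congr rfl fun d hdz ↦ ?_
  obtain ⟨hd, w, rfl⟩ := (mem_primaryDivisors hz.ne_zero).mp hdz
  rw [mul_div_cancel_left₀ w hd.ne_zero, heckeChar_mul hd (hd.mul_iff.mp hz)]
  ring

lemma dvd_natCast_absNorm (z : GaussianInt) : z ∣ (absNorm z : GaussianInt) := by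
  refine ⟨star z, ?_⟩
  rw [← Zsqrtd.norm_eq_mul_conj, Zsqrtd.norm_def, ← Int.cast_natCast, coe_absNorm]
  congr 1
  ring

lemma exists_prime_dvd_natCast {π : GaussianInt} (hπ : Prime π) :
    ∃ p : ℕ, p.Prime ∧ π ∣ (p : GaussianInt) ∧ ∃ k, k ≠ 0 ∧ absNorm π = p ^ k := by
  have hdvd := dvd_natCast_absNorm π
  rw [← Nat.prod_primeFactorsList (absNorm_pos hπ.ne_zero).ne', Nat.cast_list_prod,
    hπ.dvd_prod_iff] at hdvd
  obtain ⟨_, hmem, hdvd⟩ := hdvd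
  obtain ⟨p, hp, rfl⟩ := List.mem_map.mp hmem
  have hp := Nat.prime_of_mem_primeFactorsList hp
  have hnorm := map_dvd absNorm hdvd
  rw [absNorm_natCast] at hnorm
  obtain ⟨k, -, hk⟩ := (Nat.dvd_prime_pow hp).mp hnorm
  refine ⟨p, hp, hdvd, k, ?_, hk⟩
  rintro rfl
  exact absurd (two_le_absNorm hπ) (by simp [hk])

lemma gaussianVonMangoldt_pow_le (hz : IsPrimary z) (hz' : Prime z) (j : ℕ) :
    gaussianVonMangoldt (z ^ j) ≤ gaussianVonMangoldt z := by
  rcases j.eq_zero_or_pos with rfl | hj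
  · rw [pow_zero, gaussianVonMangoldt_of_isUnit isUnit_one]
    exact gaussianVonMangoldt_nonneg z
  · rw [gaussianVonMangoldt_pow hz hz' hj, ← gaussianVonMangoldt_pow hz hz' one_pos, pow_one]

open scoped Classical in
lemma sum_gaussianVonMangoldt_primaryOfNorm_le {a : ℕ} (ha : Odd a) (m : ℕ) :
    ∑ z ∈ primaryOfNorm (a ^ m), gaussianVonMangoldt z ≤ 2 * Real.log a := by
  obtain ⟨u, hu, hua⟩ := exists_isUnit_isPrimary_mul (z := a) (by
    rw [absNorm_natCast]; exact ha.pow)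
  have hnorm : absNorm (u * a) = a ^ 2 := by
    rw [map_mul, absNorm_eq_one_iff.mpr hu, one_mul, absNorm_natCast]
  set T := (primaryDivisors (u * a)).filter Prime
  have hT : ∀ π ∈ T, IsPrimary π ∧ Prime π := fun π hπ ↦
    ⟨((mem_primaryDivisors hua.ne_zero).mp (Finset.mem_filter.mp hπ).1).1,
      (Finset.mem_filter.mp hπ).2⟩
  set e : GaussianInt → GaussianInt := fun π ↦ π ^ Nat.log (absNorm π) (a ^ m)
  have hsubset : (primaryOfNorm (a ^ m)).filter (gaussianVonMangoldt · ≠ 0) ⊆ T.image e := by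
    intro z hz
    obtain ⟨hz, hne⟩ := Finset.mem_filter.mp hz
    have hz := (mem_primaryOfNorm.mp hz).2
    obtain ⟨π, hπ, hπ', j, hj, rfl⟩ := exists_pow_eq_of_gaussianVonMangoldt_ne_zero hne
    have hdvd : π ∣ (a : GaussianInt) := by
      refine hπ'.dvd_of_dvd_pow (n := m) ?_
      rw [← Nat.cast_pow, ← hz]
      exact (dvd_pow_self π hj.ne').trans (dvd_natCast_absNorm _)
    refine Finset.mem_image.mpr ⟨π, Finset.mem_filter.mpr
      ⟨(mem_primaryDivisors hua.ne_zero).mpr ⟨hπ, hdvd.mul_left u⟩, hπ'⟩, ?_⟩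
    simp only [e]
    rw [← hz, map_pow, Nat.log_pow (two_le_absNorm hπ')]
  calc ∑ z ∈ primaryOfNorm (a ^ m), gaussianVonMangoldt z
      = ∑ z ∈ (primaryOfNorm (a ^ m)).filter (gaussianVonMangoldt · ≠ 0), gaussianVonMangoldt z :=
        (Finset.sum_filter_ne_zero _).symm
    _ ≤ ∑ z ∈ T.image e, gaussianVonMangoldt z :=
        Finset.sum_le_sum_of_subset_of_nonneg hsubset fun z _ _ ↦ gaussianVonMangoldt_nonneg z
    _ ≤ ∑ π ∈ T, gaussianVonMangoldt (e π) :=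
        Finset.sum_image_le_of_nonneg (fun z _ ↦ gaussianVonMangoldt_nonneg z)
    _ ≤ ∑ π ∈ T, gaussianVonMangoldt π :=
        Finset.sum_le_sum fun π hπ ↦ gaussianVonMangoldt_pow_le (hT π hπ).1 (hT π hπ).2 _
    _ ≤ ∑ π ∈ primaryDivisors (u * a), gaussianVonMangoldt π :=
        Finset.sum_le_sum_of_subset_of_nonneg (Finset.filter_subset _ _)
          fun z _ _ ↦ gaussianVonMangoldt_nonneg z
    _ = 2 * Real.log a := by
        rw [sum_gaussianVonMangoldt hua, hnorm, Nat.cast_pow, Real.log_pow, Nat.cast_two]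

lemma norm_heckeLambda_le_sum (n : ℕ) :
    ‖heckeLambda n‖ ≤ ∑ z ∈ primaryOfNorm n, gaussianVonMangoldt z := by
  refine norm_sum_le_of_le _ fun z _ ↦ ?_
  rw [norm_mul, norm_heckeChar, mul_one, Complex.norm_real,
    Real.norm_of_nonneg (gaussianVonMangoldt_nonneg z)]

theorem norm_heckeLambda_le (n : ℕ) : ‖heckeLambda n‖ ≤ 2 * ArithmeticFunction.vonMangoldt n := by
  refine (norm_heckeLambda_le_sum n).trans ?_
  by_cases hzero : ∀ z ∈ primaryOfNorm n, gaussianVonMangoldt z = 0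
  · rw [Finset.sum_eq_zero hzero]
    exact mul_nonneg zero_le_two ArithmeticFunction.vonMangoldt_nonneg
  · push Not at hzero
    obtain ⟨z, hzn, hne⟩ := hzero
    obtain ⟨hz, rfl⟩ := mem_primaryOfNorm.mp hzn
    obtain ⟨π, -, hπ, j, hj, rfl⟩ := exists_pow_eq_of_gaussianVonMangoldt_ne_zero hne
    obtain ⟨p, hp, -, k, hk, hnorm⟩ := exists_prime_dvd_natCast hπ
    have hpow : absNorm (π ^ j) = p ^ (k * j) := by rw [map_pow, hnorm, pow_mul]
    have hkj : k * j ≠ 0 := mul_ne_zero hk hj.ne'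
    have hodd : Odd p := by
      have hmod := hz.absNorm_mod_four
      rw [hpow] at hmod
      exact (Nat.odd_pow_iff hkj).mp (Nat.odd_iff.mpr (by omega))
    rw [hpow, ArithmeticFunction.vonMangoldt_apply_pow hkj,
      ArithmeticFunction.vonMangoldt_apply_prime hp]
    exact sum_gaussianVonMangoldt_primaryOfNorm_le hodd _

lemma primaryOfNorm_one : primaryOfNorm 1 = {1} := by
  ext z
  rw [mem_primaryOfNorm, Finset.mem_singleton, absNorm_eq_one_iff]
  constructor
  · exact fun h ↦ h.1.eq_one_of_isUnit h.2
  · rintro rfl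
    exact ⟨isPrimary_one, isUnit_one⟩

lemma heckeCoeff_one : heckeCoeff 1 = 1 := by
  rw [heckeCoeff, primaryOfNorm_one, Finset.sum_singleton, heckeChar_one]

lemma heckeLambda_one : heckeLambda 1 = 0 := by
  simpa using norm_heckeLambda_le 1

lemma heckeLambda_prime {p : ℕ} (hp : p.Prime) :
    heckeLambda p = heckeCoeff p * (Real.log p : ℂ) := by
  have hconv := sum_heckeLambda_mul_heckeCoeff p
  rw [Nat.sum_divisorsAntidiagonal (f := fun k l ↦ heckeLambda k * heckeCoeff l),
    hp.sum_divisors] at hconv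
  simpa [heckeLambda_one, heckeCoeff_one, Nat.div_self hp.pos] using hconv

end HeckeCoefficients

section HeckeCoefficientsAtPrimes

variable {z : GaussianInt} {n p : ℕ}

lemma heckeCoeff_eq_zero_of_mod_four (h : n % 4 ≠ 1) : heckeCoeff n = 0 := by
  refine Finset.sum_eq_zero fun z hzn ↦ ?_
  obtain ⟨hz, rfl⟩ := mem_primaryOfNorm.mp hzn
  exact absurd hz.absNorm_mod_four h

lemma star_mem_primaryOfNorm (hz : z ∈ primaryOfNorm n) : star z ∈ primaryOfNorm n := by
  rw [mem_primaryOfNorm, absNorm_star]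
  exact (mem_primaryOfNorm.mp hz).imp_left IsPrimary.star

lemma heckeCoeff_eq_zero_of_mod_eight (h : n % 8 = 5) : heckeCoeff n = 0 := by
  have hstar : ∀ z ∈ primaryOfNorm n, heckeChar (star z) = -heckeChar z := by
    intro z hzn
    obtain ⟨hz, rfl⟩ := mem_primaryOfNorm.mp hzn
    exact heckeChar_star_of_absNorm_mod_eight hz h
  refine Finset.sum_involution (fun z _ ↦ star z) (fun z hz ↦ by rw [hstar z hz, add_neg_cancel])
    (fun z hz hne heq ↦ hne ?_) (fun z hz ↦ star_mem_primaryOfNorm hz) (fun z _ ↦ star_star z)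
  have := hstar z hz
  rw [heq] at this
  exact self_eq_neg.mp this

lemma norm_heckeCoeff_prime_le (hp : p.Prime) : ‖heckeCoeff p‖ ≤ 2 := by
  have hle := norm_heckeLambda_le p
  have hlog : 0 < Real.log p := Real.log_pos (by exact_mod_cast hp.one_lt)
  rw [heckeLambda_prime hp, norm_mul, ArithmeticFunction.vonMangoldt_apply_prime hp,
    Complex.norm_real, Real.norm_of_nonneg hlog.le] at hle
  exact le_of_mul_le_mul_right hle hlog

lemma heckeCoeff_prime_eq_card_mul [Decidable (∃ w : ZMod p, w ^ 4 = 2)] (hp : p.Prime)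
    (h : p % 8 = 1) :
    heckeCoeff p = (primaryOfNorm p).card * if ∃ w : ZMod p, w ^ 4 = 2 then 1 else -1 := by
  have : Fact p.Prime := ⟨hp⟩
  rw [heckeCoeff, Finset.sum_congr rfl fun z hz ↦ heckeChar_of_absNorm_eq_prime h
    (mem_primaryOfNorm.mp hz).1 (mem_primaryOfNorm.mp hz).2, Finset.sum_const, nsmul_eq_mul]

lemma exists_mem_primaryOfNorm_prime (hp : p.Prime) (h : p % 4 = 1) : ∃ z, z ∈ primaryOfNorm p := by
  have : Fact p.Prime := ⟨hp⟩
  obtain ⟨a, b, hab⟩ := Nat.Prime.sq_add_sq (p := p) (by omega)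
  have hnorm : absNorm ⟨a, b⟩ = p := by
    zify
    rw [coe_absNorm, ← hab]
    push_cast
    rfl
  obtain ⟨u, hu, hz⟩ := exists_isUnit_isPrimary_mul (z := ⟨a, b⟩)
    (by rw [hnorm, Nat.odd_iff]; omega)
  exact ⟨_, mem_primaryOfNorm.mpr
    ⟨hz, by rw [map_mul, absNorm_eq_one_iff.mpr hu, hnorm, one_mul]⟩⟩

lemma star_ne_self_of_absNorm_eq_prime (hp : p.Prime) (hz : absNorm z = p) : star z ≠ z := by
  intro heq
  have him : z.im = 0 := self_eq_neg.mp (congrArg Zsqrtd.im heq).symm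
  refine hp.prime.not_isSquare ⟨z.re.natAbs, ?_⟩
  zify
  rw [← hz, coe_absNorm, him, abs_mul_abs_self]
  ring

lemma card_primaryOfNorm_prime (hp : p.Prime) (h : p % 8 = 1) : (primaryOfNorm p).card = 2 := by
  classical
  refine le_antisymm ?_ ?_
  · have hle := norm_heckeCoeff_prime_le hp
    rw [heckeCoeff_prime_eq_card_mul hp h, norm_mul, Complex.norm_natCast] at hle
    have hsign : ‖(if ∃ w : ZMod p, w ^ 4 = 2 then 1 else -1 : ℂ)‖ = 1 := by split_ifs <;> simp
    rw [hsign, mul_one] at hle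
    exact_mod_cast hle
  · obtain ⟨z, hz⟩ := exists_mem_primaryOfNorm_prime hp (by omega)
    have hne := star_ne_self_of_absNorm_eq_prime hp (mem_primaryOfNorm.mp hz).2
    exact Finset.one_lt_card.mpr ⟨star z, star_mem_primaryOfNorm hz, z, hz, hne⟩

theorem heckeCoeff_prime [Decidable (∃ w : ZMod p, w ^ 4 = 2)] (hp : p.Prime) (h : p % 8 = 1) :
    heckeCoeff p = if ∃ w : ZMod p, w ^ 4 = 2 then 2 else -2 := by
  rw [heckeCoeff_prime_eq_card_mul hp h, card_primaryOfNorm_prime hp h]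
  split_ifs <;> norm_num

theorem heckeLambda_prime_eq_zero (hp : p.Prime) (h : p % 8 ≠ 1) : heckeLambda p = 0 := by
  rw [heckeLambda_prime hp, mul_eq_zero]
  by_cases h4 : p % 4 = 1
  · exact .inl (heckeCoeff_eq_zero_of_mod_eight (by omega))
  · exact .inl (heckeCoeff_eq_zero_of_mod_four h4)

end HeckeCoefficientsAtPrimes

section Cancellation

lemma norm_sum_range_le_of_antiperiodic {E : Type*} [SeminormedAddCommGroup E] {f : ℤ → E} {c : ℕ}
    (hc : 0 < c) (h : f.Antiperiodic c) (hf : ∀ b, ‖f b‖ ≤ 1) (u : ℤ) (n : ℕ) :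
    ‖∑ k ∈ Finset.range n, f (u + k)‖ ≤ 2 * c := by
  induction n using Nat.strong_induction_on with
  | _ n ih =>
  rcases lt_or_ge n (c + c) with hn | hn
  · refine (norm_sum_le_of_le _ fun k _ ↦ hf _).trans ?_
    rw [Finset.sum_const, Finset.card_range, nsmul_one, two_mul]
    exact_mod_cast hn.le
  · obtain ⟨m, rfl⟩ := Nat.exists_eq_add_of_le' hn
    have hcancel : ∑ k ∈ Finset.range c, f (u + (m + c + k : ℕ)) =
        -∑ k ∈ Finset.range c, f (u + (m + k : ℕ)) := by
      rw [← Finset.sum_neg_distrib]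
      refine Finset.sum_congr rfl fun k _ ↦ ?_
      rw [← h]
      congr 1
      push_cast
      ring
    rw [← add_assoc, Finset.sum_range_add, Finset.sum_range_add, hcancel, add_neg_cancel_right]
    exact ih m (by omega)

lemma norm_sum_Icc_le_of_antiperiodic {E : Type*} [SeminormedAddCommGroup E] {f : ℤ → E} {c : ℕ}
    (hc : 0 < c) (h : f.Antiperiodic c) (hf : ∀ b, ‖f b‖ ≤ 1) (u v : ℤ) :
    ‖∑ b ∈ Finset.Icc u v, f b‖ ≤ 2 * c := by
  rw [Int.Icc_eq_finset_map, Finset.sum_map]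
  exact norm_sum_range_le_of_antiperiodic hc h hf u _

lemma mem_Icc_neg_sqrt_iff {N : ℕ} {b : ℤ} :
    b ∈ Finset.Icc (-N.sqrt : ℤ) N.sqrt ↔ b ^ 2 ≤ N := by
  have hsq : b ^ 2 ≤ N ↔ b.natAbs ≤ N.sqrt := by
    rw [Nat.le_sqrt']
    zify
    rw [sq_abs]
  rw [Finset.mem_Icc, hsq]
  omega

lemma card_Icc_neg_sqrt_le {N : ℕ} (hN : N ≠ 0) :
    ((Finset.Icc (-N.sqrt : ℤ) N.sqrt).card : ℝ) ≤ 3 * √N := by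
  have hcard : (Finset.Icc (-N.sqrt : ℤ) N.sqrt).card = 2 * N.sqrt + 1 := by
    rw [Int.card_Icc]
    omega
  have hle : (N.sqrt : ℝ) ≤ √N := Real.nat_sqrt_le_real_sqrt
  have hone : 1 ≤ √N := Real.one_le_sqrt.mpr (by exact_mod_cast Nat.one_le_iff_ne_zero.mpr hN)
  rw [hcard]
  push_cast
  linarith

/-- The integers `b` with `a ^ 2 + b ^ 2 ≤ N`, provided that `a ^ 2 ≤ N`; the subtraction is
truncated. -/
noncomputable def discColumn (N : ℕ) (a : ℤ) : Finset ℤ :=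
  Finset.Icc (-(N - a.natAbs ^ 2).sqrt : ℤ) (N - a.natAbs ^ 2).sqrt

lemma mem_discColumn {N : ℕ} {a b : ℤ} (ha : a ^ 2 ≤ N) :
    b ∈ discColumn N a ↔ absNorm ⟨a, b⟩ ≤ N := by
  have hsq : a.natAbs ^ 2 ≤ N := by
    zify
    rwa [sq_abs]
  rw [discColumn, mem_Icc_neg_sqrt_iff, ← Nat.cast_le (α := ℤ), coe_absNorm]
  push_cast [hsq]
  rw [sq_abs, le_sub_iff_add_le']

open scoped Classical in
lemma sum_primaryUpTo {M : Type*} [AddCommMonoid M] (N : ℕ) (f : GaussianInt → M) :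
    ∑ z ∈ primaryUpTo N, f z = ∑ a ∈ Finset.Icc (-N.sqrt : ℤ) N.sqrt,
      ∑ b ∈ discColumn N a, if IsPrimary ⟨a, b⟩ then f ⟨a, b⟩ else 0 := by
  simp only [← Finset.sum_filter, Finset.sum_sigma']
  refine Finset.sum_bij' (fun z _ ↦ ⟨z.re, z.im⟩) (fun x _ ↦ ⟨x.1, x.2⟩) ?_ ?_ (fun _ _ ↦ rfl)
    (fun _ _ ↦ rfl) (fun _ _ ↦ rfl)
  · intro z hz
    rw [mem_primaryUpTo] at hz
    have hre : z.re ^ 2 ≤ N := by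
      have hle := coe_absNorm z ▸ Nat.cast_le (α := ℤ).mpr hz.2
      exact (le_add_of_nonneg_right (sq_nonneg z.im)).trans hle
    simp only [Finset.mem_sigma, Finset.mem_filter]
    exact ⟨mem_Icc_neg_sqrt_iff.mpr hre, (mem_discColumn hre).mpr hz.2, hz.1⟩
  · intro x hx
    simp only [Finset.mem_sigma, Finset.mem_filter] at hx
    exact mem_primaryUpTo.mpr ⟨hx.2.2, (mem_discColumn (mem_Icc_neg_sqrt_iff.mp hx.1)).mp hx.2.1⟩

lemma sum_sum_primaryOfNorm {M : Type*} [AddCommMonoid M] (N : ℕ) (f : GaussianInt → M) :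
    ∑ n ∈ Finset.Icc 1 N, ∑ z ∈ primaryOfNorm n, f z = ∑ z ∈ primaryUpTo N, f z := by
  have hfiber : ∀ n ∈ Finset.Icc 1 N,
      primaryOfNorm n = (primaryUpTo N).filter (absNorm · = n) := by
    intro n hn
    ext z
    rw [mem_primaryOfNorm, Finset.mem_filter, mem_primaryUpTo, and_assoc]
    exact and_congr_right fun _ ↦ ⟨fun h ↦ ⟨h.le.trans (Finset.mem_Icc.mp hn).2, h⟩, And.right⟩
  rw [Finset.sum_congr rfl fun n hn ↦ by rw [hfiber n hn]]
  refine Finset.sum_fiberwise_of_maps_to (fun z hz ↦ ?_) f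
  obtain ⟨hz, hzN⟩ := mem_primaryUpTo.mp hz
  exact Finset.mem_Icc.mpr ⟨absNorm_pos hz.ne_zero, hzN⟩

lemma card_primaryUpTo_le {N : ℕ} (hN : N ≠ 0) : ((primaryUpTo N).card : ℝ) ≤ 9 * N := by
  classical
  set J := Finset.Icc (-N.sqrt : ℤ) N.sqrt
  have hcolumn : ∀ a ∈ J, ∑ b ∈ discColumn N a, (if IsPrimary ⟨a, b⟩ then 1 else 0) ≤ J.card := by
    intro a _
    have hsqrt : (N - a.natAbs ^ 2).sqrt ≤ N.sqrt := Nat.sqrt_le_sqrt (Nat.sub_le _ _)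
    rw [Finset.sum_boole, Nat.cast_id]
    exact (Finset.card_filter_le _ _).trans
      (Finset.card_le_card (Finset.Icc_subset_Icc (by omega) (by omega)))
  have hcard : (primaryUpTo N).card ≤ J.card * J.card := by
    rw [Finset.card_eq_sum_ones, sum_primaryUpTo]
    exact Finset.sum_le_card_nsmul J _ _ hcolumn
  calc ((primaryUpTo N).card : ℝ) ≤ J.card * J.card := by exact_mod_cast hcard
    _ ≤ (3 * √N) * (3 * √N) := by gcongr <;> exact card_Icc_neg_sqrt_le hN
    _ = 9 * N := by rw [mul_mul_mul_comm, Real.mul_self_sqrt N.cast_nonneg]; norm_num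

lemma sum_norm_heckeCoeff_le (N : ℕ) : ∑ n ∈ Finset.Icc 1 N, ‖heckeCoeff n‖ ≤ 9 * N := by
  rcases eq_or_ne N 0 with rfl | hN
  · simp
  calc ∑ n ∈ Finset.Icc 1 N, ‖heckeCoeff n‖
      ≤ ∑ n ∈ Finset.Icc 1 N, ∑ _z ∈ primaryOfNorm n, (1 : ℝ) :=
        Finset.sum_le_sum fun n _ ↦ norm_sum_le_of_le _ fun z _ ↦ (norm_heckeChar z).le
    _ = (primaryUpTo N).card := by rw [sum_sum_primaryOfNorm, Finset.sum_const, nsmul_one]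
    _ ≤ 9 * N := card_primaryUpTo_le hN

lemma isPrimary_add_four_iff {a b : ℤ} : IsPrimary ⟨a, b + 4⟩ ↔ IsPrimary ⟨a, b⟩ := by
  simp only [isPrimary_iff, Int.even_iff]
  omega

lemma absNorm_add_four {a b : ℤ} (hb : Even b) :
    (absNorm ⟨a, b + 4⟩ : ZMod 16) = absNorm ⟨a, b⟩ := by
  obtain ⟨m, rfl⟩ := hb
  have hmod : (absNorm ⟨a, m + m + 4⟩ : ℤ) ≡ absNorm ⟨a, m + m⟩ [ZMOD 16] := by
    refine (Int.modEq_iff_dvd.mpr ⟨m + 1, ?_⟩).symm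
    rw [coe_absNorm, coe_absNorm]
    ring
  exact_mod_cast (ZMod.intCast_eq_intCast_iff _ _ 16).mpr hmod

open scoped Classical in
lemma antiperiodic_twisted_heckeChar (χ : DirichletCharacter ℂ 16) (a : ℤ) :
    Function.Antiperiodic (fun b ↦
      if IsPrimary ⟨a, b⟩ then χ (absNorm ⟨a, b⟩) * heckeChar ⟨a, b⟩ else 0) (4 : ℕ) := by
  intro b
  simp only [Nat.cast_ofNat, isPrimary_add_four_iff]
  split_ifs with h
  · rw [absNorm_add_four (isPrimary_iff.mp h).1, heckeChar_add_four, mul_neg]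
  · exact neg_zero.symm

theorem norm_sum_twisted_heckeCoeff_le (χ : DirichletCharacter ℂ 16) (N : ℕ) :
    ‖∑ n ∈ Finset.Icc 1 N, χ n * heckeCoeff n‖ ≤ 24 * √N := by
  classical
  rcases eq_or_ne N 0 with rfl | hN
  · simp
  have hsum : ∑ n ∈ Finset.Icc 1 N, χ n * heckeCoeff n =
      ∑ z ∈ primaryUpTo N, χ (absNorm z) * heckeChar z := by
    rw [← sum_sum_primaryOfNorm]
    refine Finset.sum_congr rfl fun n _ ↦ ?_
    rw [heckeCoeff, Finset.mul_sum]
    exact Finset.sum_congr rfl fun z hz ↦ by rw [(mem_primaryOfNorm.mp hz).2]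
  have hcolumn : ∀ a, ‖∑ b ∈ discColumn N a,
      if IsPrimary ⟨a, b⟩ then χ (absNorm ⟨a, b⟩) * heckeChar ⟨a, b⟩ else 0‖ ≤ 8 := by
    intro a
    have := norm_sum_Icc_le_of_antiperiodic four_pos (antiperiodic_twisted_heckeChar χ a)
      (fun b ↦ ?_) (-(N - a.natAbs ^ 2).sqrt : ℤ) (N - a.natAbs ^ 2).sqrt
    · exact this.trans (by norm_num)
    · split_ifs
      · rw [norm_mul, norm_heckeChar, mul_one]
        exact χ.norm_le_one _
      · simp
  rw [hsum, sum_primaryUpTo]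
  calc _ ≤ ∑ _a ∈ Finset.Icc (-N.sqrt : ℤ) N.sqrt, (8 : ℝ) :=
        norm_sum_le_of_le _ fun a _ ↦ hcolumn a
    _ ≤ 24 * √N := by
        rw [Finset.sum_const, nsmul_eq_mul]
        linarith [card_Icc_neg_sqrt_le hN]

end Cancellation

section AbelContinuation

variable {f : ℕ → ℂ} {r : ℝ} {s : ℂ}

/-- The analytic continuation of `LSeries f` obtained by Abel summation: for partial sums of size
`O(n ^ r)` it is holomorphic on `r < re s` and agrees with `LSeries f` wherever that converges. -/
noncomputable def abelContinuation (f : ℕ → ℂ) (s : ℂ) : ℂ :=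
  s * mellin (fun t ↦ ∑ k ∈ Finset.Icc 1 ⌊t⌋₊, f k) (-s)

lemma sum_Icc_floor_eq_zero (f : ℕ → ℂ) {t : ℝ} (ht : t < 1) :
    ∑ k ∈ Finset.Icc 1 ⌊t⌋₊, f k = 0 := by
  rw [Nat.floor_eq_zero.mpr ht]
  rfl

lemma differentiableAt_abelContinuation (hr : 0 ≤ r)
    (hO : (fun n : ℕ ↦ ∑ k ∈ Finset.Icc 1 n, f k) =O[atTop] fun n ↦ (n : ℝ) ^ r) (hs : r < s.re) :
    DifferentiableAt ℂ (abelContinuation f) s := by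
  have hloc : LocallyIntegrableOn (fun t : ℝ ↦ ∑ k ∈ Finset.Icc 1 ⌊t⌋₊, f k) (Ioi 0) := by
    simpa using (locallyIntegrableOn_mul_sum_Icc f le_rfl
      (locallyIntegrableOn_const (1 : ℂ)) (m := 1)).mono_set Ioi_subset_Ici_self
  have htop : (fun t : ℝ ↦ ∑ k ∈ Finset.Icc 1 ⌊t⌋₊, f k) =O[atTop] (· ^ (- -r)) := by
    refine (hO.comp_tendsto tendsto_nat_floor_atTop).trans (.of_bound 1 ?_)
    filter_upwards [eventually_ge_atTop 0] with t ht
    rw [neg_neg, one_mul, Function.comp_apply, Real.norm_of_nonneg (by positivity),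
      Real.norm_of_nonneg (by positivity)]
    exact Real.rpow_le_rpow (by positivity) (Nat.floor_le ht) hr
  have hbot : (fun t : ℝ ↦ ∑ k ∈ Finset.Icc 1 ⌊t⌋₊, f k) =O[𝓝[>] 0] (· ^ (-((-s).re - 1))) := by
    refine EventuallyEq.trans_isBigO ?_ (Asymptotics.isBigO_zero _ _)
    filter_upwards [mem_nhdsWithin_of_mem_nhds (Iio_mem_nhds one_pos)] with t ht
    exact sum_Icc_floor_eq_zero f ht
  have hmellin :=
    mellin_differentiableAt_of_isBigO_rpow hloc htop (neg_lt_neg hs) hbot (sub_one_lt _)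
  exact differentiableAt_id.mul (hmellin.comp s differentiableAt_id.neg)

lemma abelContinuation_eq_LSeries (hr : 0 ≤ r)
    (hO : (fun n : ℕ ↦ ∑ k ∈ Finset.Icc 1 n, f k) =O[atTop] fun n ↦ (n : ℝ) ^ r) (hs : r < s.re)
    (hf : LSeriesSummable f s) : abelContinuation f s = LSeries f s := by
  rw [LSeries_eq_mul_integral f hr hs hf hO, abelContinuation, mellin,
    ← integral_Ici_eq_integral_Ioi (x := 1),
    ← setIntegral_eq_of_subset_of_forall_sdiff_eq_zero
      measurableSet_Ioi (Ici_subset_Ioi.mpr one_pos)]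
  · congr 1
    refine setIntegral_congr_fun measurableSet_Ioi fun t _ ↦ ?_
    rw [smul_eq_mul, mul_comm, neg_add, sub_eq_add_neg]
  · rintro t ⟨-, ht⟩
    rw [sum_Icc_floor_eq_zero f (not_le.mp ht), zero_mul]

end AbelContinuation

section ZerosFromLogDeriv

variable {f : ℂ → ℂ} {z₀ : ℂ}

lemma tendsto_sub_mul_logDeriv (hf : AnalyticAt ℂ f z₀) (hord : analyticOrderAt f z₀ ≠ ⊤) :
    Tendsto (fun z ↦ (z - z₀) * logDeriv f z) (𝓝[≠] z₀) (𝓝 (analyticOrderNatAt f z₀)) := by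
  obtain ⟨g, hg, hg0, hfg⟩ := hf.analyticOrderAt_ne_top.mp hord
  set n := analyticOrderNatAt f z₀
  have hlim : Tendsto (fun z ↦ n + (z - z₀) * logDeriv g z) (𝓝 z₀) (𝓝 n) := by
    have hlog : ContinuousAt (logDeriv g) z₀ := hg.deriv.continuousAt.div hg.continuousAt hg0
    have hcont : ContinuousAt (fun z ↦ n + (z - z₀) * logDeriv g z) z₀ := by fun_prop
    simpa [ContinuousAt] using hcont
  refine (hlim.mono_left nhdsWithin_le_nhds).congr' ?_
  filter_upwards [self_mem_nhdsWithin, nhdsWithin_le_nhds hfg.eventually_nhds,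
    nhdsWithin_le_nhds (hg.continuousAt.eventually_ne hg0),
    nhdsWithin_le_nhds hg.eventually_analyticAt] with z hz hfz hgz hgan
  have hz0 : z - z₀ ≠ 0 := sub_ne_zero.mpr hz
  have hlogDeriv : logDeriv f z = n / (z - z₀) + logDeriv g z := by
    rw [logDeriv_apply, EventuallyEq.deriv_eq hfz, hfz.self_of_nhds, ← logDeriv_apply]
    simp only [smul_eq_mul]
    rw [logDeriv_mul (f := fun z ↦ (z - z₀) ^ n) z (pow_ne_zero n hz0) hgz (by fun_prop)
      hgan.differentiableAt, logDeriv_fun_pow (by fun_prop)]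
    simp [logDeriv_apply, div_eq_mul_inv]
  rw [hlogDeriv, mul_add, mul_div_cancel₀ _ hz0]

lemma ne_zero_of_norm_logDeriv_le (hf : AnalyticAt ℂ f z₀) (hord : analyticOrderAt f z₀ ≠ ⊤)
    {c K : ℝ} (hc : c < 1) (h : ∀ᶠ ε : ℝ in 𝓝[>] 0, ‖logDeriv f (z₀ + ε)‖ ≤ c / ε + K) :
    f z₀ ≠ 0 := by
  have hray : Tendsto (fun ε : ℝ ↦ z₀ + ε) (𝓝[>] 0) (𝓝[≠] z₀) := by
    refine tendsto_nhdsWithin_iff.mpr ⟨?_, ?_⟩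
    · have hcont : Continuous fun ε : ℝ ↦ z₀ + ε := by fun_prop
      simpa using (hcont.tendsto 0).mono_left nhdsWithin_le_nhds
    · filter_upwards [self_mem_nhdsWithin] with ε hε
      simpa using (mem_Ioi.mp hε).ne'
  have hlim := ((tendsto_sub_mul_logDeriv hf hord).comp hray).norm
  have hbound : Tendsto (fun ε : ℝ ↦ c + ε * K) (𝓝[>] 0) (𝓝 c) := by
    have hcont : Continuous fun ε : ℝ ↦ c + ε * K := by fun_prop
    simpa using (hcont.tendsto 0).mono_left nhdsWithin_le_nhds
  have hle : ‖(analyticOrderNatAt f z₀ : ℂ)‖ ≤ c := by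
    refine le_of_tendsto_of_tendsto hlim hbound ?_
    filter_upwards [h, self_mem_nhdsWithin] with ε hε hpos
    rw [Function.comp_apply, add_sub_cancel_left, norm_mul, Complex.norm_real,
      Real.norm_of_nonneg (mem_Ioi.mp hpos).le]
    calc ε * ‖logDeriv f (z₀ + ε)‖ ≤ ε * (c / ε + K) :=
          mul_le_mul_of_nonneg_left hε (mem_Ioi.mp hpos).le
      _ = c + ε * K := by rw [mul_add, mul_div_cancel₀ _ (mem_Ioi.mp hpos).ne']
  rw [Complex.norm_natCast] at hle
  have hzero : analyticOrderNatAt f z₀ = 0 := by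
    exact_mod_cast Nat.lt_one_iff.mp (by exact_mod_cast hle.trans_lt hc)
  rw [← hf.analyticOrderAt_eq_zero, ← Nat.cast_analyticOrderNatAt hord, hzero, Nat.cast_zero]

end ZerosFromLogDeriv

section LSeriesResidue

open ArithmeticFunction

variable {f g : ℕ → ℂ} {c d : ℂ} {s : ℂ}

/-- The Dirichlet series of `f` converges absolutely for `1 < re s` and, after subtracting the polar
part `c / (s - 1)`, extends continuously to `1 ≤ re s`: the input of the Wiener–Ikehara theorem. -/
structure HasLSeriesResidue (f : ℕ → ℂ) (c : ℂ) : Prop where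
  summable : ∀ s : ℂ, 1 < s.re → LSeriesSummable f s
  exists_continuousOn : ∃ G : ℂ → ℂ, ContinuousOn G {s | 1 ≤ s.re} ∧
    ∀ s, 1 < s.re → LSeries f s = c / (s - 1) + G s

lemma lseriesSummable_of_norm_le (hg : LSeriesSummable g s) (h : ∀ n, ‖f n‖ ≤ ‖g n‖) :
    LSeriesSummable f s :=
  .of_norm_bounded hg.norm fun n ↦ LSeries.norm_term_le s (h n)

lemma HasLSeriesResidue.add (hf : HasLSeriesResidue f c) (hg : HasLSeriesResidue g d) :
    HasLSeriesResidue (f + g) (c + d) := by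
  obtain ⟨hfs, F, hF, hFeq⟩ := hf
  obtain ⟨hgs, G, hG, hGeq⟩ := hg
  refine ⟨fun s hs ↦ (hfs s hs).add (hgs s hs), F + G, hF.add hG, fun s hs ↦ ?_⟩
  rw [LSeries_add (hfs s hs) (hgs s hs), hFeq s hs, hGeq s hs, Pi.add_apply]
  ring

lemma HasLSeriesResidue.const_smul (hf : HasLSeriesResidue f c) (a : ℂ) :
    HasLSeriesResidue (a • f) (a * c) := by
  obtain ⟨hfs, F, hF, hFeq⟩ := hf
  refine ⟨fun s hs ↦ (hfs s hs).smul a, a • F, hF.const_smul a, fun s hs ↦ ?_⟩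
  rw [LSeries_smul, hFeq s hs, Pi.smul_apply, smul_eq_mul]
  ring

lemma HasLSeriesResidue.of_summable_one (hf : LSeriesSummable f 1) : HasLSeriesResidue f 0 := by
  refine ⟨fun s hs ↦ hf.of_re_le_re hs.le, LSeries f, ?_, fun s _ ↦ by rw [zero_div, zero_add]⟩
  refine continuousOn_tsum (fun n ↦ ?_) hf.norm
    fun n s (hs : 1 ≤ s.re) ↦ LSeries.norm_term_le_of_re_le_re f hs n
  exact fun s _ ↦ (LSeries.hasDerivAt_term f n s).continuousAt.continuousWithinAt

lemma HasLSeriesResidue.sum {ι : Type*} {F : ι → ℕ → ℂ} {b : ι → ℂ} (t : Finset ι)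
    (h : ∀ i ∈ t, HasLSeriesResidue (F i) (b i)) :
    HasLSeriesResidue (∑ i ∈ t, F i) (∑ i ∈ t, b i) := by
  classical
  induction t using Finset.induction_on with
  | empty => exact .of_summable_one LSeriesSummable_zero
  | insert i t hi ih =>
    rw [Finset.sum_insert hi, Finset.sum_insert hi]
    exact (h i (t.mem_insert_self i)).add (ih fun j hj ↦ h j (Finset.mem_insert_of_mem hj))

lemma exists_norm_LSeries_le {u : ℕ → ℝ} (hu : HasLSeriesResidue (fun n ↦ (u n : ℂ)) c)
    (hfu : ∀ n, ‖f n‖ ≤ u n) :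
    ∃ K : ℝ, ∀ s : ℂ, 1 ≤ s.re → ∀ ε ∈ Ioc (0 : ℝ) 1, ‖LSeries f (s + ε)‖ ≤ ‖c‖ / ε + K := by
  obtain ⟨hus, G, hG, hGeq⟩ := hu
  have hu0 : ∀ n, 0 ≤ u n := fun n ↦ (norm_nonneg _).trans (hfu n)
  obtain ⟨K, hK⟩ : ∃ K, ∀ ε ∈ Icc (0 : ℝ) 1, ‖G (1 + ε)‖ ≤ K := by
    refine isCompact_Icc.exists_bound_of_continuousOn (hG.comp (by fun_prop) fun ε hε ↦ ?_)
    simpa using hε.1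
  refine ⟨K, fun s hs ε hε ↦ ?_⟩
  have hre : 1 < (1 + ε : ℂ).re := by simpa using hε.1
  have hterm : ∀ n, LSeries.term (fun n ↦ (u n : ℂ)) (1 + ε) n =
      ‖LSeries.term (fun n ↦ (u n : ℂ)) (1 + ε) n‖ := by
    intro n
    rw [← Complex.ofReal_one, ← Complex.ofReal_add]
    exact (Complex.norm_of_nonneg' (LSeries.term_nonneg (mod_cast hu0 n) _)).symm
  have hle : ∀ n, ‖LSeries.term f (s + ε) n‖ ≤ ‖LSeries.term (fun n ↦ (u n : ℂ)) (1 + ε) n‖ := by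
    refine fun n ↦ (LSeries.norm_term_le_of_re_le_re f (s := 1 + ε) (by simpa using hs) n).trans
      (LSeries.norm_term_le _ ?_)
    rw [Complex.norm_real, Real.norm_of_nonneg (hu0 n)]
    exact hfu n
  calc ‖LSeries f (s + ε)‖
      ≤ ∑' n, ‖LSeries.term (fun n ↦ (u n : ℂ)) (1 + ε) n‖ :=
        tsum_of_norm_bounded (hus _ hre).norm.hasSum hle
    _ = ‖LSeries (fun n ↦ (u n : ℂ)) (1 + ε)‖ := by
        rw [LSeries, tsum_congr hterm, ← Complex.ofReal_tsum, Complex.norm_real,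
          Real.norm_of_nonneg (tsum_nonneg fun n ↦ norm_nonneg _)]
    _ = ‖c / ε + G (1 + ε)‖ := by rw [hGeq _ hre, add_sub_cancel_left]
    _ ≤ ‖c‖ / ε + K := by
        refine (norm_add_le _ _).trans (add_le_add (le_of_eq ?_) (hK ε ⟨hε.1.le, hε.2⟩))
        rw [norm_div, Complex.norm_real, Real.norm_of_nonneg hε.1.le]

lemma hasLSeriesResidue_residueClass {q : ℕ} [NeZero q] {a : ZMod q} (ha : IsUnit a) :
    HasLSeriesResidue (fun n ↦ (vonMangoldt.residueClass a n : ℂ)) (q.totient : ℂ)⁻¹ where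
  summable s hs := by
    refine lseriesSummable_of_norm_le (LSeriesSummable_vonMangoldt hs) fun n ↦ ?_
    rw [Complex.norm_real, Complex.norm_real, Real.norm_of_nonneg vonMangoldt_nonneg,
      Real.norm_of_nonneg (vonMangoldt.residueClass_nonneg a n)]
    exact vonMangoldt.residueClass_le a n
  exists_continuousOn := by
    refine ⟨_, vonMangoldt.continuousOn_LFunctionResidueClassAux a, fun s hs ↦ ?_⟩
    rw [vonMangoldt.eqOn_LFunctionResidueClassAux ha hs, add_sub_cancel]

lemma residueClass_one_apply (q n : ℕ) :
    vonMangoldt.residueClass (1 : ZMod q) n = if n % q = 1 % q then vonMangoldt n else 0 := by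
  have hmod : (n : ZMod q) = 1 ↔ n % q = 1 % q := by
    rw [← ZMod.natCast_eq_natCast_iff', Nat.cast_one]
  simp only [vonMangoldt.residueClass, indicator_apply, mem_ofPred, hmod]

lemma residueClass_one_of_mod_one (n : ℕ) :
    vonMangoldt.residueClass (1 : ZMod 1) n = vonMangoldt n := by
  rw [residueClass_one_apply, if_pos (by rw [Nat.mod_one])]

lemma hasLSeriesResidue_vonMangoldt : HasLSeriesResidue (fun n ↦ (vonMangoldt n : ℂ)) 1 := by
  simpa only [residueClass_one_of_mod_one, Nat.totient_one, Nat.cast_one, inv_one] using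
    hasLSeriesResidue_residueClass (a := (1 : ZMod 1)) isUnit_one

lemma HasLSeriesResidue.congr_of_prime (hf : HasLSeriesResidue f c) {C : ℝ}
    (hfg : ∀ n, ‖g n - f n‖ ≤ C * vonMangoldt n) (hprime : ∀ p : ℕ, p.Prime → g p = f p) :
    HasLSeriesResidue g c := by
  have hsum : LSeriesSummable (g - f) 1 := by
    refine .of_norm_bounded
      ((vonMangoldt.summable_residueClass_non_primes_div (1 : ZMod 1)).mul_left C) fun n ↦ ?_
    rw [LSeries.norm_term_eq, residueClass_one_of_mod_one, Complex.one_re, Real.rpow_one]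
    split_ifs with hn hp hp
    · simp
    · simp [hn]
    · simp [hprime n hp]
    · rw [← mul_div_assoc]
      gcongr
      exact hfg n
  simpa using hf.add (.of_summable_one hsum)

end LSeriesResidue

section NonvanishingOnLine

variable {f g : ℕ → ℂ} {r : ℝ} {s : ℂ}

lemma abscissaOfAbsConv_le_one (hf : ∀ s : ℂ, 1 < s.re → LSeriesSummable f s) :
    LSeries.abscissaOfAbsConv f ≤ (1 : ℝ) :=
  LSeries.abscissaOfAbsConv_le_of_forall_lt_LSeriesSummable fun y hy ↦ hf y (by simpa using hy)

lemma deriv_LSeries_of_convolution_eq_logMul (hf : ∀ s : ℂ, 1 < s.re → LSeriesSummable f s)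
    (hg : LSeriesSummable g s) (hfg : LSeries.convolution g f = LSeries.logMul f) (hs : 1 < s.re) :
    deriv (LSeries f) s = -(LSeries g s * LSeries f s) := by
  have habs : LSeries.abscissaOfAbsConv f < s.re :=
    (abscissaOfAbsConv_le_one hf).trans_lt (mod_cast hs)
  rw [LSeries_deriv habs, ← hfg, LSeries_convolution' hg (hf s hs)]

lemma deriv_abelContinuation_of_convolution_eq_logMul (hr : 0 ≤ r) (hr1 : r < 1)
    (hO : (fun n : ℕ ↦ ∑ k ∈ Finset.Icc 1 n, f k) =O[atTop] fun n ↦ (n : ℝ) ^ r)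
    (hf : ∀ s : ℂ, 1 < s.re → LSeriesSummable f s) (hg : LSeriesSummable g s)
    (hfg : LSeries.convolution g f = LSeries.logMul f) (hs : 1 < s.re) :
    deriv (abelContinuation f) s = -(LSeries g s * abelContinuation f s) := by
  have heq : ∀ z : ℂ, 1 < z.re → abelContinuation f z = LSeries f z := fun z hz ↦
    abelContinuation_eq_LSeries hr hO (hr1.trans hz) (hf z hz)
  have hev : abelContinuation f =ᶠ[𝓝 s] LSeries f := by
    filter_upwards [(isOpen_lt continuous_const Complex.continuous_re).mem_nhds hs] using heq
  rw [hev.deriv_eq, heq s hs, deriv_LSeries_of_convolution_eq_logMul hf hg hfg hs]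

lemma analyticOnNhd_abelContinuation (hr : 0 ≤ r)
    (hO : (fun n : ℕ ↦ ∑ k ∈ Finset.Icc 1 n, f k) =O[atTop] fun n ↦ (n : ℝ) ^ r) :
    AnalyticOnNhd ℂ (abelContinuation f) {s | r < s.re} :=
  DifferentiableOn.analyticOnNhd
    (fun _ hs ↦ (differentiableAt_abelContinuation hr hO hs).differentiableWithinAt)
    (isOpen_lt continuous_const Complex.continuous_re)

lemma analyticOrderAt_abelContinuation_ne_top (hr : 0 ≤ r) (hr1 : r < 1)
    (hO : (fun n : ℕ ↦ ∑ k ∈ Finset.Icc 1 n, f k) =O[atTop] fun n ↦ (n : ℝ) ^ r)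
    (hf : ∀ s : ℂ, 1 < s.re → LSeriesSummable f s) (hf1 : f 1 ≠ 0) (hs : r < s.re) :
    analyticOrderAt (abelContinuation f) s ≠ ⊤ := by
  have hlim := LSeries.tendsto_atTop (f := f)
    ((abscissaOfAbsConv_le_one hf).trans_lt (EReal.coe_lt_top _))
  obtain ⟨x, hx, hx1⟩ := ((hlim.eventually_ne hf1).and (eventually_gt_atTop 1)).exists
  have hx1' : 1 < (x : ℂ).re := hx1
  have hrx : r < (x : ℂ).re := hr1.trans hx1
  have han := analyticOnNhd_abelContinuation hr hO
  refine han.analyticOrderAt_ne_top_of_isPreconnected (convex_halfSpace_re_gt r).isPreconnected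
    hrx hs ?_
  rw [(han x hrx).analyticOrderAt_eq_zero.mpr]
  · exact ENat.zero_ne_top
  · rwa [abelContinuation_eq_LSeries hr hO hrx (hf x hx1')]

-- A zero on the line would make the residue of the logarithmic derivative a positive integer,
-- whereas domination by `u` bounds it by `‖c‖ < 1`.
theorem hasLSeriesResidue_zero_of_convolution_eq_logMul (hr : 0 ≤ r) (hr1 : r < 1)
    (hO : (fun n : ℕ ↦ ∑ k ∈ Finset.Icc 1 n, f k) =O[atTop] fun n ↦ (n : ℝ) ^ r)
    (hf : ∀ s : ℂ, 1 < s.re → LSeriesSummable f s) (hf1 : f 1 ≠ 0)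
    (hfg : LSeries.convolution g f = LSeries.logMul f) {u : ℕ → ℝ} {c : ℂ}
    (hu : HasLSeriesResidue (fun n ↦ (u n : ℂ)) c) (hc : ‖c‖ < 1) (hgu : ∀ n, ‖g n‖ ≤ u n) :
    HasLSeriesResidue g 0 := by
  have hg : ∀ s : ℂ, 1 < s.re → LSeriesSummable g s := fun s hs ↦
    lseriesSummable_of_norm_le (hu.summable s hs) fun n ↦ by
      rw [Complex.norm_real]
      exact (hgu n).trans (Real.le_norm_self _)
  have hderiv : ∀ s : ℂ, 1 < s.re → deriv (abelContinuation f) s =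
      -(LSeries g s * abelContinuation f s) := fun s hs ↦
    deriv_abelContinuation_of_convolution_eq_logMul hr hr1 hO hf (hg s hs) hfg hs
  have han := analyticOnNhd_abelContinuation hr hO
  have hsub : {s : ℂ | 1 ≤ s.re} ⊆ {s | r < s.re} := fun s hs ↦ hr1.trans_le hs
  obtain ⟨K, hK⟩ := exists_norm_LSeries_le hu hgu
  have hne : ∀ s : ℂ, 1 ≤ s.re → abelContinuation f s ≠ 0 := by
    intro s hs
    refine ne_zero_of_norm_logDeriv_le (han s (hsub hs))
      (analyticOrderAt_abelContinuation_ne_top hr hr1 hO hf hf1 (hsub hs)) hc (K := K) ?_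
    filter_upwards [Ioc_mem_nhdsGT one_pos] with ε hε
    refine le_trans ?_ (hK s hs ε hε)
    rw [logDeriv_apply, hderiv _ (by rw [Complex.add_re, Complex.ofReal_re]; linarith [hε.1]),
      norm_div, norm_neg, norm_mul]
    exact div_le_of_le_mul₀ (norm_nonneg _) (norm_nonneg _) le_rfl
  refine ⟨hg, -logDeriv (abelContinuation f), ?_, fun s hs ↦ ?_⟩
  · exact (ContinuousOn.div (han.deriv.continuousOn.mono hsub) (han.continuousOn.mono hsub) hne).neg
  · rw [zero_div, zero_add, Pi.neg_apply, logDeriv_apply, hderiv s hs, neg_div, neg_neg,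
      mul_div_cancel_right₀ _ (hne s hs.le)]

end NonvanishingOnLine

section TwistedHeckeLSeries

open ArithmeticFunction

variable (χ : DirichletCharacter ℂ 16)

lemma norm_dirichletCharacter_mul_le {q : ℕ} (χ : DirichletCharacter ℂ q) (a : ZMod q) (z : ℂ) :
    ‖χ a * z‖ ≤ ‖z‖ := by
  rw [norm_mul]
  exact mul_le_of_le_one_left (norm_nonneg z) (χ.norm_le_one a)

lemma lseriesSummable_twisted_heckeCoeff {s : ℂ} (hs : 1 < s.re) :
    LSeriesSummable (((χ ·) : ℕ → ℂ) * heckeCoeff) s := by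
  refine LSeriesSummable_of_sum_norm_bigO (r := 1) (.of_bound 9 ?_) zero_le_one hs
  refine Eventually.of_forall fun N ↦ ?_
  rw [Real.rpow_one, Real.norm_of_nonneg (by positivity), Real.norm_of_nonneg (by positivity)]
  exact (Finset.sum_le_sum fun (n : ℕ) _ ↦ norm_dirichletCharacter_mul_le χ n (heckeCoeff n)).trans
    (sum_norm_heckeCoeff_le N)

lemma sum_twisted_heckeCoeff_isBigO :
    (fun N : ℕ ↦ ∑ n ∈ Finset.Icc 1 N, (((χ ·) : ℕ → ℂ) * heckeCoeff) n) =O[atTop]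
      fun N ↦ (N : ℝ) ^ (1 / 2 : ℝ) := by
  refine .of_bound 24 (Eventually.of_forall fun N ↦ ?_)
  rw [← Real.sqrt_eq_rpow, Real.norm_of_nonneg (Real.sqrt_nonneg _)]
  exact norm_sum_twisted_heckeCoeff_le χ N

lemma heckeLambda_convolution_heckeCoeff :
    LSeries.convolution heckeLambda heckeCoeff = LSeries.logMul heckeCoeff := by
  ext n
  rw [LSeries.logMul, ← Complex.natCast_log, mul_comm, ← sum_heckeLambda_mul_heckeCoeff]
  exact congrFun (LSeries.convolution_def _ _) n

lemma twisted_heckeLambda_convolution :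
    LSeries.convolution (((χ ·) : ℕ → ℂ) * heckeLambda) (((χ ·) : ℕ → ℂ) * heckeCoeff) =
      LSeries.logMul (((χ ·) : ℕ → ℂ) * heckeCoeff) := by
  rw [χ.mul_convolution_distrib, heckeLambda_convolution_heckeCoeff]
  ext n
  exact mul_left_comm _ _ _

/-- A majorant of `‖heckeLambda n‖` whose Dirichlet series has residue `1 / 2`: twice `Λ`, with the
primes `p ≢ 1 [MOD 8]` left out. -/
noncomputable def heckeLambdaMajorant (n : ℕ) : ℝ :=
  if n.Prime then 2 * vonMangoldt.residueClass (1 : ZMod 8) n else 2 * vonMangoldt n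

lemma norm_heckeLambda_le_majorant (n : ℕ) : ‖heckeLambda n‖ ≤ heckeLambdaMajorant n := by
  rw [heckeLambdaMajorant]
  split_ifs with hn
  · rw [residueClass_one_apply]
    split_ifs with h8
    · exact norm_heckeLambda_le n
    · rw [heckeLambda_prime_eq_zero hn h8, norm_zero, mul_zero]
  · exact norm_heckeLambda_le n

lemma hasLSeriesResidue_heckeLambdaMajorant :
    HasLSeriesResidue (fun n ↦ (heckeLambdaMajorant n : ℂ)) (1 / 2) := by
  have hres := (hasLSeriesResidue_residueClass (a := (1 : ZMod 8)) isUnit_one).const_smul 2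
  rw [show Nat.totient 8 = 4 by decide, show (2 * ((4 : ℕ) : ℂ)⁻¹) = 1 / 2 by norm_num] at hres
  refine hres.congr_of_prime (C := 2) (fun n ↦ ?_) fun p hp ↦ ?_
  · have hle := vonMangoldt.residueClass_le (1 : ZMod 8) n
    have hnn := vonMangoldt.residueClass_nonneg (1 : ZMod 8) n
    rw [Pi.smul_apply, smul_eq_mul, heckeLambdaMajorant]
    norm_cast
    rw [Real.norm_eq_abs, abs_le]
    split_ifs <;> constructor <;> linarith [vonMangoldt_nonneg (n := n)]
  · simp [heckeLambdaMajorant, hp]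

theorem hasLSeriesResidue_twisted_heckeLambda :
    HasLSeriesResidue (((χ ·) : ℕ → ℂ) * heckeLambda) 0 :=
  hasLSeriesResidue_zero_of_convolution_eq_logMul (by norm_num) (by norm_num)
    (sum_twisted_heckeCoeff_isBigO χ) (fun _ ↦ lseriesSummable_twisted_heckeCoeff χ)
    (by simp [heckeCoeff_one]) (twisted_heckeLambda_convolution χ)
    hasLSeriesResidue_heckeLambdaMajorant (by norm_num)
    fun n ↦ (norm_dirichletCharacter_mul_le χ n _).trans (norm_heckeLambda_le_majorant n)

end TwistedHeckeLSeries

section NaturalDensity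

open ArithmeticFunction

variable {S : Set ℕ} {c : ℝ}

/-- The indicator function of `S` weighted by the logarithm; for a set of primes, its partial sums
are the contribution of `S` to Chebyshev's function `θ`. -/
noncomputable def logIndicator (S : Set ℕ) : ℕ → ℝ :=
  S.indicator fun n : ℕ ↦ Real.log n

lemma logIndicator_nonneg (S : Set ℕ) (n : ℕ) : 0 ≤ logIndicator S n :=
  indicator_nonneg (fun k _ ↦ Real.log_natCast_nonneg k) n

lemma sum_logIndicator_primes (n : ℕ) :
    ∑ k ∈ Finset.Icc 1 n, logIndicator {p | p.Prime} k = Chebyshev.theta n := by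
  rw [Chebyshev.theta_eq_sum_primesLE_log, Nat.primesLE_eq_filter_Icc_one]
  exact Finset.sum_indicator_eq_sum_filter _ (fun _ (k : ℕ) ↦ Real.log k)
    (fun _ ↦ {p | p.Prime}) id

lemma sum_logIndicator_le (hS : S ⊆ {p | p.Prime}) (n : ℕ) :
    ∑ k ∈ Finset.Icc 1 n, logIndicator S k ≤ Real.log 4 * n :=
  calc ∑ k ∈ Finset.Icc 1 n, logIndicator S k
      ≤ ∑ k ∈ Finset.Icc 1 n, logIndicator {p | p.Prime} k := Finset.sum_le_sum fun k _ ↦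
        indicator_le_indicator_apply_of_subset hS (Real.log_natCast_nonneg k)
    _ = Chebyshev.theta n := sum_logIndicator_primes n
    _ ≤ Real.log 4 * n := Chebyshev.theta_le_log4_mul_x n.cast_nonneg

lemma tendsto_sum_logIndicator_div (hS : S ⊆ {p | p.Prime})
    (h : HasLSeriesResidue (fun n ↦ (logIndicator S n : ℂ)) c) :
    Tendsto (fun n : ℕ ↦ (∑ k ∈ Finset.Icc 1 n, logIndicator S k) / n) atTop (𝓝 c) := by
  obtain ⟨G, hG, hGeq⟩ := h.exists_continuousOn
  exact tendsto_sum_div_of_LSeries_eq_add (logIndicator_nonneg S) (sum_logIndicator_le hS) hG hGeq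

lemma natCard_mul_log_sub_sum_logIndicator (hS : 0 ∉ S) (n : ℕ) :
    (Nat.card {p : ℕ | p ≤ n ∧ p ∈ S} : ℝ) * Real.log n - ∑ k ∈ Finset.Icc 1 n, logIndicator S k =
      ∑ k ∈ Finset.Icc 1 n, S.indicator (fun k ↦ Real.log n - Real.log k) k := by
  classical
  have hcard : {p : ℕ | p ≤ n ∧ p ∈ S} = ((Finset.Icc 1 n).filter (· ∈ S) : Finset ℕ) := by
    ext p
    have hp : p ∈ S → 1 ≤ p := fun hp ↦ Nat.one_le_iff_ne_zero.mpr (ne_of_mem_of_not_mem hp hS)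
    simp only [mem_ofPred, Finset.coe_filter, Finset.mem_Icc]
    tauto
  rw [hcard, Nat.card_coe_set_eq, ncard_coe_finset, Finset.card_filter, Nat.cast_sum,
    Finset.sum_mul, ← Finset.sum_sub_distrib]
  refine Finset.sum_congr rfl fun k _ ↦ ?_
  by_cases hk : k ∈ S <;> simp [logIndicator, hk]

lemma tendsto_sum_indicator_primes_log_sub_log_div : Tendsto (fun n : ℕ ↦
    (∑ k ∈ Finset.Icc 1 n, indicator {p : ℕ | p.Prime} (fun k ↦ Real.log n - Real.log k) k) / n)
    atTop (𝓝 0) := by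
  have hsum (n : ℕ) :
      ∑ k ∈ Finset.Icc 1 n, indicator {p : ℕ | p.Prime} (fun k ↦ Real.log n - Real.log k) k =
        n.primeCounting * Real.log n - Chebyshev.theta n := by
    rw [← natCard_mul_log_sub_sum_logIndicator (S := {p | p.Prime}) Nat.not_prime_zero,
      sum_logIndicator_primes, ← Nat.primesLE_card_eq_primeCounting, ← Nat.card_eq_finsetCard]
    simp only [mem_ofPred, Nat.mem_primesLE]
    rfl
  have hcast : Tendsto (fun n : ℕ ↦ (n : ℝ)) atTop atTop := tendsto_natCast_atTop_atTop
  have hO := (Chebyshev.primeCounting_sub_theta_div_log_isBigO.comp_tendsto hcast).mul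
    (Asymptotics.isBigO_refl (fun n : ℕ ↦ Real.log n / n) atTop)
  refine (hO.congr' ?_ ?_).trans_tendsto (Real.tendsto_log_atTop.comp hcast).inv_tendsto_atTop
  all_goals
    filter_upwards [eventually_ge_atTop 2] with n hn
    have hlog : Real.log n ≠ 0 := (Real.log_pos (mod_cast hn)).ne'
    have hn0 : (n : ℝ) ≠ 0 := by positivity
  · rw [hsum, Function.comp_apply, Nat.floor_natCast]
    field
  · simp only [Function.comp_apply, Pi.inv_apply]
    field

lemma tendsto_natCard_mul_log_sub_div (hS : S ⊆ {p | p.Prime}) : Tendsto (fun n : ℕ ↦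
    ((Nat.card {p : ℕ | p ≤ n ∧ p ∈ S} : ℝ) * Real.log n -
      ∑ k ∈ Finset.Icc 1 n, logIndicator S k) / n) atTop (𝓝 0) := by
  have hlog (n : ℕ) : ∀ k ∈ Finset.Icc 1 n, 0 ≤ Real.log n - Real.log k := by
    intro k hk
    obtain ⟨hk1, hkn⟩ := Finset.mem_Icc.mp hk
    exact sub_nonneg.mpr (Real.log_le_log (Nat.cast_pos.mpr hk1) (mod_cast hkn))
  simp_rw [natCard_mul_log_sub_sum_logIndicator fun h ↦ Nat.not_prime_zero (hS h)]
  refine squeeze_zero (fun n ↦ ?_) (fun n ↦ ?_) tendsto_sum_indicator_primes_log_sub_log_div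
  · exact div_nonneg (Finset.sum_nonneg fun k hk ↦ indicator_apply_nonneg fun _ ↦ hlog n k hk)
      n.cast_nonneg
  · gcongr with k hk
    exact hlog n k hk

lemma tendsto_natCard_mul_log_div (hS : S ⊆ {p | p.Prime})
    (h : HasLSeriesResidue (fun n ↦ (logIndicator S n : ℂ)) c) :
    Tendsto (fun n : ℕ ↦ (Nat.card {p : ℕ | p ≤ n ∧ p ∈ S} : ℝ) * Real.log n / n) atTop (𝓝 c) := by
  simpa only [← add_div, sub_add_cancel, zero_add] using
    (tendsto_natCard_mul_log_sub_div hS).add (tendsto_sum_logIndicator_div hS h)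

lemma logIndicator_le_vonMangoldt (hS : S ⊆ {p | p.Prime}) (n : ℕ) :
    logIndicator S n ≤ vonMangoldt n :=
  indicator_apply_le' (fun hp ↦ (vonMangoldt_apply_prime (hS hp)).ge) fun _ ↦ vonMangoldt_nonneg

lemma hasLSeriesResidue_logIndicator_primes :
    HasLSeriesResidue (fun n ↦ (logIndicator {p | p.Prime} n : ℂ)) 1 := by
  refine hasLSeriesResidue_vonMangoldt.congr_of_prime (C := 1) (fun n ↦ ?_) fun p hp ↦ ?_
  · have hle := logIndicator_le_vonMangoldt Subset.rfl n
    rw [← Complex.ofReal_sub, Complex.norm_real, Real.norm_eq_abs, abs_le]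
    constructor <;> linarith [logIndicator_nonneg {p | p.Prime} n]
  · rw [vonMangoldt_apply_prime hp, logIndicator, indicator_of_mem (mem_ofPred.mpr hp)]

theorem tendsto_natCard_div_natCard_primes (hS : S ⊆ {p | p.Prime})
    (h : HasLSeriesResidue (fun n ↦ (logIndicator S n : ℂ)) c) :
    Tendsto (fun n : ℕ ↦ (Nat.card {p : ℕ | p ≤ n ∧ p ∈ S} : ℝ) /
      (Nat.card {p : ℕ | p ≤ n ∧ p.Prime} : ℝ)) atTop (𝓝 c) := by
  have hlim := (tendsto_natCard_mul_log_div hS h).div (tendsto_natCard_mul_log_div Subset.rfl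
    (c := 1) (mod_cast hasLSeriesResidue_logIndicator_primes)) one_ne_zero
  rw [div_one] at hlim
  refine hlim.congr' ?_
  filter_upwards [eventually_ge_atTop 2] with n hn
  have hlog : Real.log n ≠ 0 := (Real.log_pos (mod_cast hn)).ne'
  have hn0 : (n : ℝ) ≠ 0 := by positivity
  exact (div_div_div_cancel_right₀ hn0 _ _).trans (mul_div_mul_right _ _ hlog)

end NaturalDensity

section QuarticNonresidue

open ArithmeticFunction

lemma sum_dirichletCharacter_mul (q n : ℕ) [NeZero q] (z : ℂ) :
    ∑ χ : DirichletCharacter ℂ q, χ n * z = if n % q = 1 % q then q.totient * z else 0 := by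
  have horth := DirichletCharacter.sum_char_inv_mul_char_eq ℂ isUnit_one (n : ZMod q)
  have hmod : (1 : ZMod q) = n ↔ n % q = 1 % q := by
    rw [← ZMod.natCast_eq_natCast_iff', Nat.cast_one, eq_comm]
  simp only [ZMod.inv_one, map_one, one_mul, hmod] at horth
  rw [← Finset.sum_mul, horth, ite_mul, zero_mul]

/-- The primes `p ≡ 1 [MOD 16]` with quartic residue symbol `(2/p)₄ = -1`. -/
def quarticNonresiduePrimes : Set ℕ :=
  {p | p.Prime ∧ p % 16 = 1 ∧ ¬ ∃ x : ZMod p, x ^ 4 = 2}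

lemma quarticNonresiduePrimes_subset : quarticNonresiduePrimes ⊆ {p | p.Prime} :=
  fun _ hp ↦ hp.1

/-- The combination of `Λ` and the Hecke coefficients, restricted to `n ≡ 1 [MOD 16]`, which agrees
with `logIndicator quarticNonresiduePrimes` at the primes. -/
noncomputable def quarticNonresidueLambda (n : ℕ) : ℂ :=
  if n % 16 = 1 then vonMangoldt n / 2 - heckeLambda n / 4 else 0

lemma norm_quarticNonresidueLambda_le (n : ℕ) : ‖quarticNonresidueLambda n‖ ≤ vonMangoldt n := by
  rw [quarticNonresidueLambda]
  split_ifs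
  · refine (norm_sub_le _ _).trans ?_
    rw [norm_div, norm_div, Complex.norm_real, Real.norm_of_nonneg vonMangoldt_nonneg,
      Complex.norm_ofNat, Complex.norm_ofNat]
    linarith [norm_heckeLambda_le n]
  · rw [norm_zero]
    exact vonMangoldt_nonneg

lemma quarticNonresidueLambda_prime {p : ℕ} (hp : p.Prime) :
    quarticNonresidueLambda p = logIndicator quarticNonresiduePrimes p := by
  classical
  by_cases h16 : p % 16 = 1
  · rw [quarticNonresidueLambda, if_pos h16, vonMangoldt_apply_prime hp, heckeLambda_prime hp,
      heckeCoeff_prime hp (by lia), logIndicator, indicator_apply]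
    simp only [quarticNonresiduePrimes, mem_ofPred, hp, h16, true_and]
    split_ifs <;> push_cast <;> ring
  · rw [quarticNonresidueLambda, if_neg h16, logIndicator,
      indicator_of_notMem fun h ↦ h16 h.2.1, Complex.ofReal_zero]

lemma hasLSeriesResidue_quarticNonresidueLambda :
    HasLSeriesResidue quarticNonresidueLambda (1 / 16) := by
  have htotient : Nat.totient 16 = 8 := by decide
  have hclass := (hasLSeriesResidue_residueClass (a := (1 : ZMod 16)) isUnit_one).const_smul (1 / 2)
  have hhecke := (HasLSeriesResidue.sum Finset.univ fun χ _ ↦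
    hasLSeriesResidue_twisted_heckeLambda χ).const_smul (-1 / 32)
  convert hclass.add hhecke using 1
  · ext n
    simp only [Pi.add_apply, Pi.smul_apply, Finset.sum_apply, Pi.mul_apply, smul_eq_mul,
      sum_dirichletCharacter_mul, residueClass_one_apply, quarticNonresidueLambda, htotient]
    split_ifs <;> push_cast <;> ring
  · rw [htotient, Finset.sum_const_zero]
    norm_num

lemma hasLSeriesResidue_logIndicator_quarticNonresiduePrimes :
    HasLSeriesResidue (fun n ↦ (logIndicator quarticNonresiduePrimes n : ℂ)) (1 / 16) := by
  refine hasLSeriesResidue_quarticNonresidueLambda.congr_of_prime (C := 2) (fun n ↦ ?_)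
    fun p hp ↦ (quarticNonresidueLambda_prime hp).symm
  have hle := logIndicator_le_vonMangoldt quarticNonresiduePrimes_subset n
  refine (norm_sub_le _ _).trans ?_
  rw [Complex.norm_real, Real.norm_of_nonneg (logIndicator_nonneg _ n)]
  linarith [norm_quarticNonresidueLambda_le n]

end QuarticNonresidue

end QuarticDensity

/-- The set of primes `p ≡ 1 (mod 16)` such that `2` is not a fourth
power modulo `p` has natural density `1/16` in the set of all primes. -/
theorem density_of_primes_one_mod_sixteen_two_not_fourth_power :
    Tendsto
      (fun X : ℕ =>
        (Nat.card {p : ℕ | p ≤ X ∧ p.Prime ∧ p % 16 = 1 ∧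
            ¬ ∃ x : ZMod p, x ^ 4 = 2} : ℝ) /
          (Nat.card {p : ℕ | p ≤ X ∧ p.Prime} : ℝ))
      atTop (nhds (1 / 16)) := by
  have hresidue : QuarticDensity.HasLSeriesResidue
      (fun n ↦ (QuarticDensity.logIndicator QuarticDensity.quarticNonresiduePrimes n : ℂ))
      (1 / 16 : ℝ) := by
    simpa only [Complex.ofReal_div, Complex.ofReal_one, Complex.ofReal_ofNat] using
      QuarticDensity.hasLSeriesResidue_logIndicator_quarticNonresiduePrimes
  exact QuarticDensity.tendsto_natCard_div_natCard_primes
    QuarticDensity.quarticNonresiduePrimes_subset hresidue
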